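/- Let d ≥ 1, let α = (α_1,…,α_d) be a multi-index with α_j > −1/2 for each j, and let 0 < λ < β < 1. Set c_λ = ∫_0^∞ u^{−λ−1}(e^{−u}−1) du and define the Bessel Laguerre fractional derivative 𝒟_λ^α f(x) = (1/c_λ) ∫_0^∞ t^{−λ−1} (e^{−t} P_t^α f(x) − f(x)) dt. Then there exists C > 0, depending only on α, d, β, λ, such that for every bounded measurable f on (0,∞)^d satisfying sup_x |∂_t P_t^α f(x)| ≤ A t^{β−1} for all t > 0, one has: sup_x |𝒟_λ^α f(x)| ≤ C (∥f∥_∞ + A), and sup_x |∂_t P_t^α(𝒟_λ^α f)(x)| ≤ C (∥f∥_∞ + A) t^{β−λ−1} for all t > 0. In particular 𝒟_λ^α maps Lip_β(μ_α) boundedly into Lip_{β−λ}(μ_α). -/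

import Mathlib

open MeasureTheory Real Set

noncomputable def besselI (ν z : ℝ) : ℝ :=
  ∑' m : ℕ, (z / 2) ^ (2 * (m : ℝ) + ν) / (Nat.factorial m * Real.Gamma ((m : ℝ) + ν + 1))

/-- The positive orthant `(0,∞)^d`. -/
def posOrthant (d : ℕ) : Set (Fin d → ℝ) := Set.univ.pi fun _ => Set.Ioi 0

/-- The Poisson–Laguerre kernel `p_t^α(x,y)`. -/
noncomputable def plKernel (d : ℕ) (α : Fin d → ℝ) (t : ℝ) (x y : Fin d → ℝ) : ℝ :=
  (1 / (2 * Real.sqrt π)) *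
    ∫ r in Set.Ioo (0 : ℝ) 1,
      (t * Real.exp (t ^ 2 / (4 * Real.log r)) /
          ((1 - r) ^ d * (-Real.log r) ^ ((3 : ℝ) / 2))) *
        (∏ j, (y j / x j) ^ (α j / 2) *
            Real.exp (-((r * x j + y j) / (1 - r)) - α j * Real.log r / 2) *
            besselI (α j) (2 * Real.sqrt (r * x j * y j) / (1 - r))) / r

/-- The Poisson–Laguerre semigroup `P_t^α f`, with the convention `P_0^α f = f`. -/
noncomputable def plP (d : ℕ) (α : Fin d → ℝ) (t : ℝ)
    (f : (Fin d → ℝ) → ℝ) (x : Fin d → ℝ) : ℝ :=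
  if t = 0 then f x else ∫ y in posOrthant d, plKernel d α t x y * f y

/-- The Bessel Laguerre fractional derivative `𝒟_λ^α f` for `0 < λ < 1`. -/
noncomputable def besselLaguerreFracDeriv (d : ℕ) (α : Fin d → ℝ) (lam : ℝ)
    (f : (Fin d → ℝ) → ℝ) (x : Fin d → ℝ) : ℝ :=
  (1 / ∫ u in Set.Ioi (0 : ℝ), u ^ (-lam - 1) * (Real.exp (-u) - 1)) *
    ∫ t in Set.Ioi (0 : ℝ), t ^ (-lam - 1) * (Real.exp (-t) * plP d α t f x - f x)

open ProbabilityTheory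

/-- A finite measure on `ℝ^ι` carried by the positive orthant is determined by the values of its
Laplace transform at the points with natural number coordinates. -/
theorem ext_of_laplace {ι : Type*} [Fintype ι] {μ ν : Measure (ι → ℝ)} [IsFiniteMeasure μ]
    [IsFiniteMeasure ν] (hμ : ∀ᵐ y ∂μ, ∀ i, 0 < y i) (hν : ∀ᵐ y ∂ν, ∀ i, 0 < y i)
    (h : ∀ k : ι → ℕ, ∫⁻ y, ENNReal.ofReal (exp (-∑ i, k i * y i)) ∂μ =
      ∫⁻ y, ENNReal.ofReal (exp (-∑ i, k i * y i)) ∂ν) : μ = ν := by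
  classical
  let Φ : (ι → ℝ) → (ι → unitInterval) := fun y i => projIcc 0 1 zero_le_one (exp (-y i))
  let Ψ : (ι → unitInterval) → (ι → ℝ) := fun z i => -log (z i)
  have hΦ : Measurable Φ := by
    refine measurable_pi_lambda _ fun i => ?_
    exact (continuous_projIcc.measurable).comp (by fun_prop)
  have hΨ : Measurable Ψ := by
    refine measurable_pi_lambda _ fun i => ?_
    exact (measurable_log.comp (measurable_subtype_coe.comp (measurable_pi_apply i))).neg
  have hcoe : ∀ y : ι → ℝ, (∀ i, 0 < y i) → ∀ i, (Φ y i : ℝ) = exp (-y i) := by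
    intro y hy i
    simp only [Φ]
    rw [projIcc_of_mem zero_le_one ⟨(exp_pos _).le, by simpa using (hy i).le⟩]
  have hinv : ∀ y : ι → ℝ, (∀ i, 0 < y i) → Ψ (Φ y) = y := by
    intro y hy
    ext i
    simp [Ψ, hcoe y hy i]
  have key : ∀ ρ : Measure (ι → ℝ), (∀ᵐ y ∂ρ, ∀ i, 0 < y i) → (ρ.map Φ).map Ψ = ρ := by
    intro ρ hρ
    rw [Measure.map_map hΨ hΦ, Measure.map_congr (g := id), Measure.map_id]
    filter_upwards [hρ] with y hy using hinv y hy
  let c : ι → BoundedContinuousFunction (ι → unitInterval) ℝ := fun i =>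
    BoundedContinuousFunction.mkOfCompact ⟨fun z => (z i : ℝ), by fun_prop⟩
  let A : StarSubalgebra ℝ (BoundedContinuousFunction (ι → unitInterval) ℝ) :=
    { Algebra.adjoin ℝ (range c) with
      star_mem' := by
        intro a ha
        have : star a = a := by ext; simp
        rw [this]; exact ha }
  have hmono : ∀ ρ : Measure (ι → ℝ), (∀ᵐ y ∂ρ, ∀ i, 0 < y i) → ∀ k : ι → ℕ,
      ∫ z, (∏ i, c i ^ k i) z ∂(ρ.map Φ) =
        (∫⁻ y, ENNReal.ofReal (exp (-∑ i, k i * y i)) ∂ρ).toReal := by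
    intro ρ hρ k
    rw [integral_map hΦ.aemeasurable
      (BoundedContinuousFunction.continuous _).aestronglyMeasurable]
    rw [← integral_eq_lintegral_of_nonneg_ae (Filter.Eventually.of_forall fun _ => (exp_pos _).le)
      (Continuous.aestronglyMeasurable (by fun_prop))]
    refine integral_congr_ae ?_
    filter_upwards [hρ] with y hy
    rw [BoundedContinuousFunction.coe_prod, Finset.prod_apply, ← Finset.sum_neg_distrib, exp_sum]
    refine Finset.prod_congr rfl fun i _ => ?_
    rw [BoundedContinuousFunction.coe_pow, Pi.pow_apply]
    change ((Φ y i : ℝ)) ^ k i = _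
    rw [hcoe y hy i, ← exp_nat_mul]
    congr 1; ring
  have hmap : μ.map Φ = ν.map Φ := by
    refine ext_of_forall_mem_subalgebra_integral_eq_of_polish (𝕜 := ℝ) (A := A) ?_ ?_
    · intro z w hzw
      obtain ⟨i, hi⟩ := Function.ne_iff.mp hzw
      refine ⟨fun z => (z i : ℝ), ⟨⟨fun z => (z i : ℝ), by fun_prop⟩, ?_, rfl⟩, ?_⟩
      · exact ⟨c i, Algebra.subset_adjoin ⟨i, rfl⟩, rfl⟩
      · exact fun h' => hi (Subtype.ext h')
    · intro g hg
      have hg' : g ∈ Submodule.span ℝ (Submonoid.closure (range c) :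
          Set (BoundedContinuousFunction (ι → unitInterval) ℝ)) := by
        rw [← Algebra.adjoin_eq_span]; exact hg
      clear hg
      have hinteg : ∀ (ρ : Measure (ι → unitInterval)) [IsFiniteMeasure ρ]
          (a : BoundedContinuousFunction (ι → unitInterval) ℝ), Integrable a ρ :=
        fun ρ _ a => a.integrable ρ
      induction hg' using Submodule.span_induction with
      | mem a ha =>
        have : ∃ k : ι → ℕ, a = ∏ i, c i ^ k i := by
          induction ha using Submonoid.closure_induction with
          | mem a ha =>
            obtain ⟨i, rfl⟩ := ha
            refine ⟨Pi.single i 1, ?_⟩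
            rw [Finset.prod_eq_single i] <;> simp +contextual
          | one => exact ⟨0, by simp⟩
          | mul a b _ _ ha hb =>
            obtain ⟨k, rfl⟩ := ha
            obtain ⟨l, rfl⟩ := hb
            exact ⟨k + l, by simp [pow_add, Finset.prod_mul_distrib]⟩
        obtain ⟨k, rfl⟩ := this
        rw [hmono μ hμ, hmono ν hν, h k]
      | zero => simp
      | add a b ha hb iha ihb =>
        rw [BoundedContinuousFunction.coe_add]
        simp only [Pi.add_apply]
        rw [integral_add (hinteg _ a) (hinteg _ b), integral_add (hinteg _ a) (hinteg _ b)]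
        rw [iha, ihb]
      | smul r a ha iha =>
        rw [BoundedContinuousFunction.coe_smul]
        rw [integral_smul, integral_smul, iha]
  rw [← key μ hμ, hmap, key ν hν]

/-- One-dimensional version of `ext_of_laplace`. -/
theorem ext_of_laplace_real {μ ν : Measure ℝ} [IsFiniteMeasure μ]
    [IsFiniteMeasure ν] (hμ : ∀ᵐ y ∂μ, 0 < y) (hν : ∀ᵐ y ∂ν, 0 < y)
    (h : ∀ k : ℕ, ∫⁻ y, ENNReal.ofReal (exp (-(k * y))) ∂μ =
      ∫⁻ y, ENNReal.ofReal (exp (-(k * y))) ∂ν) : μ = ν := by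
  let e : (Unit → ℝ) ≃ᵐ ℝ := MeasurableEquiv.funUnique Unit ℝ
  have hpos : ∀ ρ : Measure ℝ, (∀ᵐ y ∂ρ, 0 < y) →
      ∀ᵐ y ∂(ρ.map e.symm), ∀ i, 0 < y i := by
    intro ρ hρ
    rw [e.symm.measurableEmbedding.ae_map_iff]
    filter_upwards [hρ] with y hy i using hy
  have : μ.map e.symm = ν.map e.symm := by
    refine ext_of_laplace (hpos μ hμ) (hpos ν hν) fun k => ?_
    rw [e.symm.measurableEmbedding.lintegral_map, e.symm.measurableEmbedding.lintegral_map]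
    have := h (k ())
    simp only [Finset.univ_unique, Finset.sum_singleton]
    exact this
  have h2 := congrArg (Measure.map e) this
  rwa [Measure.map_map e.measurable e.symm.measurable,
    Measure.map_map e.measurable e.symm.measurable, e.self_comp_symm, Measure.map_id,
    Measure.map_id] at h2

/-- The density in `s` of the one-sided stable law of index `1/2` with parameter `t`. -/
noncomputable def subDensity (t s : ℝ) : ℝ :=
  t * exp (-(t ^ 2 / (4 * s))) / (2 * √π * s ^ ((3 : ℝ) / 2))

theorem subDensity_nonneg {t s : ℝ} (ht : 0 ≤ t) (hs : 0 ≤ s) : 0 ≤ subDensity t s := by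
  unfold subDensity; positivity

theorem measurable_subDensity : Measurable fun p : ℝ × ℝ => subDensity p.1 p.2 := by
  unfold subDensity; fun_prop

/-- The integral of `exp (-v ^ 2)` from `0` to `z`. -/
noncomputable def gaussPrimitive (z : ℝ) : ℝ := ∫ v in (0 : ℝ)..z, exp (-v ^ 2)

theorem hasDerivAt_gaussPrimitive (z : ℝ) :
    HasDerivAt gaussPrimitive (exp (-z ^ 2)) z :=
  (by fun_prop : Continuous fun v : ℝ => exp (-v ^ 2)).integral_hasStrictDerivAt 0 z |>.hasDerivAt

theorem gaussPrimitive_neg (z : ℝ) : gaussPrimitive (-z) = -gaussPrimitive z := by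
  unfold gaussPrimitive
  rw [← intervalIntegral.integral_symm]
  have := intervalIntegral.integral_comp_neg (a := 0) (b := -z) (fun v : ℝ => exp (-v ^ 2))
  simpa using this

theorem tendsto_gaussPrimitive_atTop :
    Filter.Tendsto gaussPrimitive Filter.atTop (nhds (√π / 2)) := by
  have h1 : IntegrableOn (fun v : ℝ => exp (-v ^ 2)) (Ioi 0) := by
    simpa using (integrable_exp_neg_mul_sq one_pos).integrableOn
  have h2 := intervalIntegral_tendsto_integral_Ioi 0 h1 Filter.tendsto_id
  have h3 := integral_gaussian_Ioi 1
  simp only [neg_mul, one_mul, div_one] at h3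
  rw [h3] at h2
  exact h2

theorem tendsto_gaussPrimitive_atBot :
    Filter.Tendsto gaussPrimitive Filter.atBot (nhds (-(√π / 2))) := by
  have := (tendsto_gaussPrimitive_atTop.comp Filter.tendsto_neg_atBot_atTop).neg
  refine this.congr fun z => ?_
  simp [gaussPrimitive_neg]

/-- A primitive of `s ↦ √π * subDensity t s * exp (-(κ ^ 2 * s))`. -/
noncomputable def subPrimitive (t κ s : ℝ) : ℝ :=
  -(exp (-(t * κ)) * gaussPrimitive (t / (2 * √s) - κ * √s)) -
    exp (t * κ) * gaussPrimitive (t / (2 * √s) + κ * √s)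

theorem hasDerivAt_subPrimitive (t κ : ℝ) {s : ℝ} (hs : 0 < s) :
    HasDerivAt (subPrimitive t κ) (√π * (subDensity t s * exp (-(κ ^ 2 * s)))) s := by
  have hsq : 0 < √s := sqrt_pos.2 hs
  have hss : √s ^ 2 = s := sq_sqrt hs.le
  have h0 : HasDerivAt (fun s => √s) (1 / (2 * √s)) s := hasDerivAt_sqrt hs.ne'
  have hp : HasDerivAt (fun s => t / (2 * √s)) (-(t / (4 * √s ^ 3))) s := by
    have := (h0.const_mul 2).fun_inv (by positivity) |>.const_mul t
    simp only [← div_eq_mul_inv] at this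
    convert! this using 1
    field_simp
    ring
  have hq : HasDerivAt (fun s => κ * √s) (κ * (1 / (2 * √s))) s := h0.const_mul κ
  have hm := (hasDerivAt_gaussPrimitive (t / (2 * √s) - κ * √s)).comp s (hp.sub hq)
  have hpl := (hasDerivAt_gaussPrimitive (t / (2 * √s) + κ * √s)).comp s (hp.add hq)
  have := ((hm.const_mul (exp (-(t * κ)))).neg).sub (hpl.const_mul (exp (t * κ)))
  have hpi : 0 < √π := sqrt_pos.2 pi_pos
  refine this.congr_deriv ?_
  have e1 : exp (-(t * κ)) * exp (-(t / (2 * √s) - κ * √s) ^ 2) =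
      exp (-(t ^ 2 / (4 * s))) * exp (-(κ ^ 2 * s)) := by
    rw [← exp_add, ← exp_add]
    congr 1
    rw [← hss]; simp only [sqrt_sq hsq.le]
    field_simp
    ring
  have e2 : exp (t * κ) * exp (-(t / (2 * √s) + κ * √s) ^ 2) =
      exp (-(t ^ 2 / (4 * s))) * exp (-(κ ^ 2 * s)) := by
    rw [← exp_add, ← exp_add]
    congr 1
    rw [← hss]; simp only [sqrt_sq hsq.le]
    field_simp
    ring
  have e3 : s ^ ((3 : ℝ) / 2) = √s ^ 3 := by
    rw [sqrt_eq_rpow, ← rpow_natCast, ← rpow_mul hs.le]; norm_num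
  rw [← mul_assoc, ← mul_assoc, e1, e2]
  unfold subDensity
  rw [e3]
  field_simp
  ring

theorem tendsto_subPrimitive_zero {t : ℝ} (ht : 0 < t) (κ : ℝ) :
    Filter.Tendsto (subPrimitive t κ) (nhdsWithin 0 (Ioi 0))
      (nhds (-(exp (-(t * κ)) * (√π / 2)) - exp (t * κ) * (√π / 2))) := by
  have hs : Filter.Tendsto (fun s : ℝ => √s) (nhdsWithin 0 (Ioi 0)) (nhdsWithin 0 (Ioi 0)) := by
    refine tendsto_nhdsWithin_iff.2 ⟨?_, ?_⟩
    · have := (continuous_sqrt.tendsto 0).mono_left (nhdsWithin_le_nhds (s := Ioi 0))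
      simpa using this
    · filter_upwards [self_mem_nhdsWithin] with s hs using sqrt_pos.2 hs
  have hp : Filter.Tendsto (fun s : ℝ => t / (2 * √s)) (nhdsWithin 0 (Ioi 0)) Filter.atTop := by
    have := (tendsto_inv_nhdsGT_zero.comp hs).const_mul_atTop (half_pos ht)
    refine this.congr fun s => ?_
    simp only [Function.comp]
    rw [div_mul_eq_div_div, div_eq_mul_inv (t / 2)]
  have hq : Filter.Tendsto (fun s : ℝ => κ * √s) (nhdsWithin 0 (Ioi 0)) (nhds 0) := by
    simpa using (hs.mono_right nhdsWithin_le_nhds).const_mul κ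
  have h1 := tendsto_gaussPrimitive_atTop.comp (hp.atTop_add hq.neg)
  have h2 := tendsto_gaussPrimitive_atTop.comp (hp.atTop_add hq)
  have := ((h1.const_mul (exp (-(t * κ)))).neg).sub (h2.const_mul (exp (t * κ)))
  refine this.congr fun s => ?_
  simp [subPrimitive, sub_eq_add_neg]

theorem tendsto_subPrimitive_atTop (t : ℝ) {κ : ℝ} (hκ : 0 ≤ κ) :
    Filter.Tendsto (subPrimitive t κ) Filter.atTop
      (nhds (exp (-(t * κ)) * (√π / 2) - exp (t * κ) * (√π / 2))) := by
  have hs := tendsto_sqrt_atTop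
  have hp : Filter.Tendsto (fun s : ℝ => t / (2 * √s)) Filter.atTop (nhds 0) :=
    (hs.const_mul_atTop two_pos).const_div_atTop t
  rcases hκ.eq_or_lt with rfl | hκ
  · have h0 : gaussPrimitive 0 = 0 := by simp [gaussPrimitive]
    have h1 := (hasDerivAt_gaussPrimitive 0).continuousAt.tendsto.comp hp
    rw [h0] at h1
    have := h1.neg.sub h1
    simp only [Function.comp_def] at this
    have h2 : subPrimitive t 0 =
        fun s => -gaussPrimitive (t / (2 * √s)) - gaussPrimitive (t / (2 * √s)) := by
      ext s; simp [subPrimitive]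
    rw [h2]
    simpa using this
  · have hq := hs.const_mul_atTop hκ
    have h1 := tendsto_gaussPrimitive_atBot.comp
      (hp.add_atBot (Filter.tendsto_neg_atTop_atBot.comp hq))
    have h2 := tendsto_gaussPrimitive_atTop.comp (hp.add_atTop hq)
    have := ((h1.const_mul (exp (-(t * κ)))).neg).sub (h2.const_mul (exp (t * κ)))
    rw [mul_neg, neg_neg] at this
    refine this.congr fun s => ?_
    simp [subPrimitive, sub_eq_add_neg]

theorem integrableOn_and_integral_subDensity_mul_exp {t κ : ℝ} (ht : 0 < t) (hκ : 0 ≤ κ) :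
    IntegrableOn (fun s => subDensity t s * exp (-(κ ^ 2 * s))) (Ioi 0) ∧
      ∫ s in Ioi 0, subDensity t s * exp (-(κ ^ 2 * s)) = exp (-(t * κ)) := by
  set m := -(exp (-(t * κ)) * (√π / 2)) - exp (t * κ) * (√π / 2) with hm
  have hpi : 0 < √π := sqrt_pos.2 pi_pos
  let G := Function.update (subPrimitive t κ) 0 m
  have hcont : ContinuousWithinAt G (Ici 0) 0 := by
    rw [continuousWithinAt_update_same, Ici_sdiff_left]
    exact tendsto_subPrimitive_zero ht κ
  have hderiv : ∀ s ∈ Ioi (0 : ℝ),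
      HasDerivAt G (√π * (subDensity t s * exp (-(κ ^ 2 * s)))) s := by
    intro s hs
    refine (hasDerivAt_subPrimitive t κ hs).congr_of_eventuallyEq ?_
    filter_upwards [isOpen_Ioi.mem_nhds hs] with u hu
    exact Function.update_of_ne (ne_of_gt hu) _ _
  have hpos : ∀ s ∈ Ioi (0 : ℝ), 0 ≤ √π * (subDensity t s * exp (-(κ ^ 2 * s))) := by
    intro s hs
    have := subDensity_nonneg ht.le (le_of_lt hs)
    positivity
  have hlim : Filter.Tendsto G Filter.atTop
      (nhds (exp (-(t * κ)) * (√π / 2) - exp (t * κ) * (√π / 2))) := by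
    refine (tendsto_subPrimitive_atTop t hκ).congr' ?_
    filter_upwards [Filter.eventually_gt_atTop 0] with u hu
    exact (Function.update_of_ne (ne_of_gt hu) _ _).symm
  have hi := integrableOn_Ioi_deriv_of_nonneg hcont hderiv hpos hlim
  have hv := integral_Ioi_of_hasDerivAt_of_nonneg hcont hderiv hpos hlim
  refine ⟨?_, ?_⟩
  · have := hi.const_mul (√π)⁻¹
    refine this.congr (Filter.Eventually.of_forall fun s => ?_)
    simp only
    field_simp
  · rw [integral_const_mul] at hv
    have hG : G 0 = m := Function.update_self ..
    rw [hG, hm] at hv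
    have : √π * ∫ s in Ioi 0, subDensity t s * exp (-(κ ^ 2 * s)) = √π * exp (-(t * κ)) := by
      rw [hv]; ring
    exact mul_left_cancel₀ hpi.ne' this

/-- The one-sided stable law of index `1/2` with parameter `t`. -/
noncomputable def subMeasure (t : ℝ) : Measure ℝ :=
  (volume.restrict (Ioi 0)).withDensity fun s => ENNReal.ofReal (subDensity t s)

theorem measurable_subDensity_right (t : ℝ) : Measurable (subDensity t) :=
  measurable_subDensity.comp measurable_prodMk_left

theorem ae_subMeasure_pos (t : ℝ) : ∀ᵐ s ∂subMeasure t, 0 < s :=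
  (withDensity_absolutelyContinuous _ _).ae_le (ae_restrict_mem measurableSet_Ioi)

theorem lintegral_exp_subMeasure {t k : ℝ} (ht : 0 < t) (hk : 0 ≤ k) :
    ∫⁻ s, ENNReal.ofReal (exp (-(k * s))) ∂subMeasure t = ENNReal.ofReal (exp (-(t * √k))) := by
  obtain ⟨h1, h2⟩ := integrableOn_and_integral_subDensity_mul_exp ht (sqrt_nonneg k)
  rw [← h2, ofReal_integral_eq_lintegral_ofReal h1, subMeasure,
    lintegral_withDensity_eq_lintegral_mul _ (measurable_subDensity_right t).ennreal_ofReal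
      (by fun_prop)]
  · refine setLIntegral_congr_fun measurableSet_Ioi fun s hs => ?_
    simp only [Pi.mul_apply]
    rw [ENNReal.ofReal_mul (subDensity_nonneg ht.le (le_of_lt hs)), sq_sqrt hk]
  · filter_upwards [ae_restrict_mem measurableSet_Ioi] with s hs
    exact mul_nonneg (subDensity_nonneg ht.le (le_of_lt hs)) (exp_pos _).le

theorem isProbabilityMeasure_subMeasure {t : ℝ} (ht : 0 < t) :
    IsProbabilityMeasure (subMeasure t) := by
  constructor
  simpa using lintegral_exp_subMeasure ht le_rfl

theorem integrableOn_subDensity {t : ℝ} (ht : 0 < t) : IntegrableOn (subDensity t) (Ioi 0) := by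
  simpa using (integrableOn_and_integral_subDensity_mul_exp ht le_rfl).1

theorem integral_subDensity {t : ℝ} (ht : 0 < t) : ∫ s in Ioi 0, subDensity t s = 1 := by
  simpa using (integrableOn_and_integral_subDensity_mul_exp ht le_rfl).2

theorem subMeasure_conv {a b : ℝ} (ha : 0 < a) (hb : 0 < b) :
    Measure.conv (subMeasure a) (subMeasure b) = subMeasure (a + b) := by
  have := isProbabilityMeasure_subMeasure ha
  have := isProbabilityMeasure_subMeasure hb
  have := isProbabilityMeasure_subMeasure (add_pos ha hb)
  refine ext_of_laplace_real ?_ (ae_subMeasure_pos _) fun k => ?_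
  · rw [Measure.conv, ae_map_iff (by fun_prop) measurableSet_Ioi]
    have h1 := Measure.quasiMeasurePreserving_fst (μ := subMeasure a) (ν := subMeasure b)
      |>.ae (ae_subMeasure_pos a)
    have h2 := Measure.quasiMeasurePreserving_snd (μ := subMeasure a) (ν := subMeasure b)
      |>.ae (ae_subMeasure_pos b)
    filter_upwards [h1, h2] with p h1 h2 using add_pos h1 h2
  · rw [Measure.lintegral_conv (by fun_prop), lintegral_exp_subMeasure (add_pos ha hb) (by simp)]
    have : ∀ x y : ℝ, ENNReal.ofReal (exp (-(k * (x + y)))) =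
        ENNReal.ofReal (exp (-(k * x))) * ENNReal.ofReal (exp (-(k * y))) := by
      intro x y
      rw [← ENNReal.ofReal_mul (exp_pos _).le, ← exp_add]
      congr 2; ring
    simp_rw [this]
    have h2 : ∀ x : ℝ, ∫⁻ y, ENNReal.ofReal (exp (-(k * x))) *
        ENNReal.ofReal (exp (-(k * y))) ∂subMeasure b =
        ENNReal.ofReal (exp (-(k * x))) * ENNReal.ofReal (exp (-(b * √k))) := by
      intro x
      rw [lintegral_const_mul _ (by fun_prop), lintegral_exp_subMeasure hb (by simp)]
    simp_rw [h2]
    rw [lintegral_mul_const _ (by fun_prop), lintegral_exp_subMeasure ha (by simp),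
      ← ENNReal.ofReal_mul (exp_pos _).le, ← exp_add]
    congr 2; ring

theorem hasDerivAt_subDensity (t s : ℝ) :
    HasDerivAt (fun u => subDensity u s)
      ((1 - t ^ 2 / (2 * s)) * exp (-(t ^ 2 / (4 * s))) / (2 * √π * s ^ ((3 : ℝ) / 2))) t := by
  have h1 : HasDerivAt (fun u : ℝ => -(u ^ 2 / (4 * s))) (-(2 * t / (4 * s))) t := by
    simpa using ((hasDerivAt_pow 2 t).div_const (4 * s)).fun_neg
  have h2 := ((hasDerivAt_id t).mul h1.exp).div_const (2 * √π * s ^ ((3 : ℝ) / 2))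
  refine h2.congr_deriv ?_
  congr 1
  rcases eq_or_ne s 0 with rfl | hs
  · simp
  · simp only [id]
    field_simp
    ring

theorem abs_deriv_subDensity_le {t s : ℝ} (ht : 0 < t) (hs : 0 < s) :
    |(1 - t ^ 2 / (2 * s)) * exp (-(t ^ 2 / (4 * s))) / (2 * √π * s ^ ((3 : ℝ) / 2))| ≤
      6 / t * subDensity (t / 2) s := by
  set z := t ^ 2 / (4 * s) with hz
  have hzpos : 0 < z := by positivity
  have e1 : t ^ 2 / (2 * s) = 2 * z := by rw [hz]; field_simp; norm_num
  have e2 : (t / 2) ^ 2 / (4 * s) = z / 4 := by rw [hz]; field_simp; norm_num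
  have hden : 0 < 2 * √π * s ^ ((3 : ℝ) / 2) := by positivity
  rw [e1, abs_div, abs_mul, abs_of_pos hden, abs_of_pos (exp_pos _), subDensity, e2,
    ← mul_div_assoc (6 / t)]
  refine div_le_div_of_nonneg_right ?_ hden.le
  have h1 : |1 - 2 * z| ≤ 1 + 2 * z := by rw [abs_le]; constructor <;> linarith
  have h2 : exp (-(z / 4)) = exp (-z) * exp (3 * z / 4) := by rw [← exp_add]; congr 1; ring
  have h3 := add_one_le_exp (3 * z / 4)
  have h4 : 6 / t * (t / 2 * exp (-(z / 4))) = 3 * exp (3 * z / 4) * exp (-z) := by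
    rw [h2]; field_simp; ring
  rw [h4]
  gcongr
  linarith

/-- Averages of a bounded function against `subDensity t` are differentiable in `t`. -/
theorem exists_hasDerivAt_integral_subDensity {F : ℝ → ℝ} {M : ℝ} (hF : Measurable F)
    (hM : ∀ s, |F s| ≤ M) {t : ℝ} (ht : 0 < t) :
    ∃ U', HasDerivAt (fun u => ∫ s in Ioi 0, subDensity u s * F s) U' t ∧ |U'| ≤ 6 * M / t := by
  have hM0 : 0 ≤ M := (abs_nonneg _).trans (hM 0)
  have hinteg : ∀ u > 0, IntegrableOn (fun s => subDensity u s * F s) (Ioi 0) := fun u hu =>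
    (integrableOn_subDensity hu).mul_bdd (c := M) hF.aestronglyMeasurable
      (Filter.Eventually.of_forall fun s => hM s)
  let D : ℝ → ℝ → ℝ := fun u s =>
    (1 - u ^ 2 / (2 * s)) * exp (-(u ^ 2 / (4 * s))) / (2 * √π * s ^ ((3 : ℝ) / 2)) * F s
  have hD := hasDerivAt_integral_of_dominated_loc_of_deriv_le (𝕜 := ℝ)
    (μ := volume.restrict (Ioi 0)) (F := fun u s => subDensity u s * F s) (F' := D) (x₀ := t)
    (s := Metric.ball t (t / 2)) (bound := fun s => 12 / t * subDensity (t / 4) s * M)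
    (Metric.ball_mem_nhds t (half_pos ht))
    (Filter.Eventually.of_forall fun u =>
      ((measurable_subDensity_right u).mul hF).aestronglyMeasurable)
    (hinteg t ht)
    (Measurable.aestronglyMeasurable (by fun_prop))
    (by
      filter_upwards [ae_restrict_mem measurableSet_Ioi] with s hs u hu
      have hs : 0 < s := hs
      have hu' : t / 2 < u := by
        rw [Metric.mem_ball, Real.dist_eq, abs_lt] at hu; linarith [hu.1]
      have hu0 : 0 < u := (half_pos ht).trans hu'
      have hden : 0 < 2 * √π * s ^ ((3 : ℝ) / 2) := by positivity
      rw [norm_mul]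
      refine mul_le_mul ((abs_deriv_subDensity_le hu0 hs).trans ?_) (hM s) (norm_nonneg _) ?_
      · have e1 : 6 / u * subDensity (u / 2) s =
            3 * (exp (-((u / 2) ^ 2 / (4 * s))) / (2 * √π * s ^ ((3 : ℝ) / 2))) := by
          unfold subDensity; field_simp; norm_num
        have e2 : 12 / t * subDensity (t / 4) s =
            3 * (exp (-((t / 4) ^ 2 / (4 * s))) / (2 * √π * s ^ ((3 : ℝ) / 2))) := by
          unfold subDensity; field_simp; norm_num
        rw [e1, e2]
        gcongr 3 * (exp (-(?_ ^ 2 / _)) / _)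
        linarith
      · have := subDensity_nonneg (t := t / 4) (by positivity) hs.le
        positivity)
    (((integrableOn_subDensity (t := t / 4) (by positivity)).const_mul _).mul_const _)
    (by
      filter_upwards with s u _
      exact (hasDerivAt_subDensity u s).mul_const (F s))
  refine ⟨_, hD.2, ?_⟩
  have hb : IntegrableOn (fun s => 6 / t * subDensity (t / 2) s * M) (Ioi 0) :=
    (((integrableOn_subDensity (t := t / 2) (by positivity)).const_mul _).mul_const _)
  have := norm_integral_le_of_norm_le hb (f := D t) (by
    filter_upwards [ae_restrict_mem measurableSet_Ioi] with s hs
    have := subDensity_nonneg (t := t / 2) (by positivity) (le_of_lt hs)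
    rw [norm_mul]
    exact mul_le_mul (abs_deriv_subDensity_le ht hs) (hM s) (norm_nonneg _) (by positivity))
  rw [integral_mul_const, integral_const_mul, integral_subDensity (half_pos ht)] at this
  refine this.trans (le_of_eq ?_)
  ring

theorem integral_subDensity_mul_eq {t : ℝ} (ht : 0 < t) (L : ℝ → ℝ) :
    ∫ s in Ioi 0, subDensity t s * L s = ∫ v in Ioi 0, subDensity 1 v * L (t ^ 2 * v) := by
  have h := integral_comp_mul_left_Ioi (fun s => subDensity t s * L s) 0 (b := t ^ 2)
    (by positivity)
  rw [mul_zero, smul_eq_mul] at h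
  have h2 : ∫ v in Ioi 0, subDensity 1 v * L (t ^ 2 * v) =
      t ^ 2 * ∫ v in Ioi 0, subDensity t (t ^ 2 * v) * L (t ^ 2 * v) := by
    rw [← integral_const_mul]
    refine setIntegral_congr_fun measurableSet_Ioi fun v hv => ?_
    have hv : 0 < v := hv
    have e1 : (t ^ 2 * v) ^ ((3 : ℝ) / 2) = t ^ 3 * v ^ ((3 : ℝ) / 2) := by
      rw [mul_rpow (by positivity) hv.le, ← rpow_natCast t 2, ← rpow_mul ht.le,
        ← rpow_natCast t 3]
      norm_num
    have e2 : t ^ 2 / (4 * (t ^ 2 * v)) = 1 ^ 2 / (4 * v) := by field_simp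
    simp only [subDensity]
    rw [e1, e2]
    field_simp
  rw [h2, h, ← mul_assoc, mul_inv_cancel₀ (by positivity), one_mul]

theorem tendsto_integral_subDensity {L : ℝ → ℝ} {M l : ℝ} (hL : Measurable L)
    (hM : ∀ s > 0, |L s| ≤ M) (hl : Filter.Tendsto L (nhdsWithin 0 (Ioi 0)) (nhds l)) :
    Filter.Tendsto (fun t => ∫ s in Ioi 0, subDensity t s * L s) (nhdsWithin 0 (Ioi 0))
      (nhds l) := by
  have h1 : Filter.Tendsto (fun t : ℝ => ∫ v in Ioi 0, subDensity 1 v * L (t ^ 2 * v))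
      (nhdsWithin 0 (Ioi 0)) (nhds (∫ v in Ioi 0, subDensity 1 v * l)) := by
    refine tendsto_integral_filter_of_dominated_convergence (fun v => subDensity 1 v * M)
      (Filter.Eventually.of_forall fun t => ?_) ?_
      ((integrableOn_subDensity one_pos).mul_const M) ?_
    · exact ((measurable_subDensity_right 1).mul (hL.comp (by fun_prop))).aestronglyMeasurable
    · filter_upwards [self_mem_nhdsWithin] with t ht
      filter_upwards [ae_restrict_mem measurableSet_Ioi] with v hv
      have hv : 0 < v := hv
      have ht : 0 < t := ht
      have h0 := subDensity_nonneg (t := 1) zero_le_one hv.le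
      rw [norm_mul, norm_of_nonneg h0]
      exact mul_le_mul_of_nonneg_left (hM _ (by positivity)) h0
    · filter_upwards [ae_restrict_mem measurableSet_Ioi] with v hv
      have hv : 0 < v := hv
      refine (hl.comp (tendsto_nhdsWithin_iff.2 ⟨?_, ?_⟩)).const_mul _
      · have : Filter.Tendsto (fun t : ℝ => t ^ 2 * v) (nhds 0) (nhds (0 ^ 2 * v)) :=
          Continuous.tendsto (by fun_prop) 0
        simpa using this.mono_left (nhdsWithin_le_nhds (s := Ioi 0))
      · filter_upwards [self_mem_nhdsWithin] with t ht
        have ht : 0 < t := ht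
        exact mem_Ioi.2 (by positivity)
  rw [integral_mul_const, integral_subDensity one_pos, one_mul] at h1
  refine h1.congr' ?_
  filter_upwards [self_mem_nhdsWithin] with t ht
  exact (integral_subDensity_mul_eq ht L).symm

theorem lintegral_pi_prod_eq_prod {n : ℕ} {μ : Fin n → Measure ℝ} [∀ i, SigmaFinite (μ i)]
    {F : Fin n → ℝ → ENNReal} (hF : ∀ i, Measurable (F i)) :
    ∫⁻ y, ∏ i, F i (y i) ∂(Measure.pi μ) = ∏ i, ∫⁻ y, F i y ∂(μ i) := by
  induction n with
  | zero => simp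
  | succ n ih =>
    rw [Fin.prod_univ_succ, ← ih (fun i => hF i.succ)]
    have hmp : MeasurePreserving (MeasurableEquiv.piFinSuccAbove (fun _ => ℝ) 0) (Measure.pi μ)
        ((μ 0).prod (Measure.pi fun i => μ i.succ)) := measurePreserving_piFinSuccAbove μ 0
    have hmeas : Measurable fun y : Fin n → ℝ => ∏ i, F i.succ (y i) :=
      Finset.measurable_prod _ fun i _ => (hF i.succ).comp (measurable_pi_apply i)
    rw [← lintegral_prod_mul (hF 0).aemeasurable hmeas.aemeasurable, ← hmp.map_eq,
      lintegral_map_equiv]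
    refine lintegral_congr fun y => ?_
    rw [Fin.prod_univ_succ]
    rfl

/-- A summand of the Laguerre heat kernel, seen as a Poisson mixture of Gamma densities. -/
noncomputable def heatTerm (α r x y : ℝ) (m : ℕ) : ℝ :=
  exp (-(r * x / (1 - r))) * (r * x / (1 - r)) ^ m / m.factorial *
    (y ^ ((m : ℝ) + α) * exp (-(y / (1 - r))) /
      ((1 - r) ^ ((m : ℝ) + α + 1) * Gamma ((m : ℝ) + α + 1)))

/-- The one-dimensional Laguerre heat kernel, with `r` standing for `exp (-s)` at time `s`. -/
noncomputable def heatFactor (α r x y : ℝ) : ENNReal :=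
  ∑' m, ENNReal.ofReal (heatTerm α r x y m)

theorem heatTerm_nonneg {α r x y : ℝ} (hα : -1 < α) (hr : 0 < r) (hr1 : r < 1) (hx : 0 ≤ x)
    (hy : 0 ≤ y) (m : ℕ) : 0 ≤ heatTerm α r x y m := by
  have h1 : 0 < 1 - r := by linarith
  have h2 : 0 < Gamma ((m : ℝ) + α + 1) :=
    Gamma_pos_of_pos (by have := m.cast_nonneg (α := ℝ); linarith)
  unfold heatTerm
  positivity

theorem lintegral_heatTerm_mul_exp {α r x k : ℝ} (hα : -1 < α) (hr : 0 < r) (hr1 : r < 1)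
    (hx : 0 ≤ x) (hk : 0 ≤ k) (m : ℕ) :
    ∫⁻ y in Ioi 0, ENNReal.ofReal (heatTerm α r x y m) * ENNReal.ofReal (exp (-(k * y))) =
      ENNReal.ofReal (exp (-(r * x / (1 - r))) * (1 + k * (1 - r)) ^ (-(α + 1)) *
        ((r * x / (1 - r) / (1 + k * (1 - r))) ^ m / m.factorial)) := by
  have h1 : 0 < 1 - r := by linarith
  have hN : 0 < 1 + k * (1 - r) := by positivity
  have hm : 0 < (m : ℝ) + α + 1 := by have := m.cast_nonneg (α := ℝ); linarith
  have hΓ : 0 < Gamma ((m : ℝ) + α + 1) := Gamma_pos_of_pos hm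
  have hc : 0 < 1 / (1 - r) + k := by positivity
  have hI := integral_rpow_mul_exp_neg_mul_Ioi hm hc
  have hne : ∫ t in Ioi (0 : ℝ), t ^ ((m : ℝ) + α + 1 - 1) * exp (-((1 / (1 - r) + k) * t)) ≠ 0 := by
    rw [hI]; positivity
  have hInt := not_imp_comm.1 integral_undef hne
  set B := exp (-(r * x / (1 - r))) * (r * x / (1 - r)) ^ m / m.factorial /
    ((1 - r) ^ ((m : ℝ) + α + 1) * Gamma ((m : ℝ) + α + 1)) with hB
  have hB0 : 0 ≤ B := by positivity
  have hL := ofReal_integral_eq_lintegral_ofReal hInt (by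
    filter_upwards [ae_restrict_mem measurableSet_Ioi] with y hy
    have hy : 0 < y := hy
    positivity)
  have hpt : ∀ y ∈ Ioi (0 : ℝ),
      ENNReal.ofReal (heatTerm α r x y m) * ENNReal.ofReal (exp (-(k * y))) =
      ENNReal.ofReal B * ENNReal.ofReal
        (y ^ ((m : ℝ) + α + 1 - 1) * exp (-((1 / (1 - r) + k) * y))) := by
    intro y hy
    have hy : 0 < y := hy
    rw [← ENNReal.ofReal_mul (heatTerm_nonneg hα hr hr1 hx hy.le m), ← ENNReal.ofReal_mul hB0]
    congr 1
    have e1 : exp (-((1 / (1 - r) + k) * y)) = exp (-(y / (1 - r))) * exp (-(k * y)) := by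
      rw [← exp_add]; congr 1; ring
    rw [e1, add_sub_cancel_right, heatTerm, hB]
    ring
  rw [setLIntegral_congr_fun measurableSet_Ioi hpt, lintegral_const_mul _ (by fun_prop), ← hL, hI,
    ← ENNReal.ofReal_mul hB0]
  congr 1
  have e2 : (1 / (1 / (1 - r) + k)) ^ ((m : ℝ) + α + 1) =
      (1 - r) ^ ((m : ℝ) + α + 1) * ((1 + k * (1 - r)) ^ (-(α + 1)) / (1 + k * (1 - r)) ^ m) := by
    have : 1 / (1 / (1 - r) + k) = (1 - r) * (1 + k * (1 - r))⁻¹ := by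
      field_simp
    rw [this, mul_rpow h1.le (by positivity), inv_rpow hN.le, ← rpow_neg hN.le, div_eq_mul_inv,
      ← rpow_natCast, ← rpow_neg hN.le, ← rpow_add hN]
    congr 2; ring
  rw [e2, hB]
  have h3 : 0 < (1 - r) ^ ((m : ℝ) + α + 1) := by positivity
  simp only [div_pow, mul_pow]
  field_simp

theorem lintegral_heatFactor_mul_exp {α r x k : ℝ} (hα : -1 < α) (hr : 0 < r) (hr1 : r < 1)
    (hx : 0 ≤ x) (hk : 0 ≤ k) :
    ∫⁻ y in Ioi 0, heatFactor α r x y * ENNReal.ofReal (exp (-(k * y))) =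
      ENNReal.ofReal ((1 + k * (1 - r)) ^ (-(α + 1)) *
        exp (-(r * k * x / (1 + k * (1 - r))))) := by
  have h1 : 0 < 1 - r := by linarith
  have hN : 0 < 1 + k * (1 - r) := by positivity
  unfold heatFactor
  simp_rw [← ENNReal.tsum_mul_right]
  rw [lintegral_tsum (fun m => by unfold heatTerm; fun_prop)]
  simp_rw [lintegral_heatTerm_mul_exp hα hr hr1 hx hk]
  have hs : HasSum (fun m : ℕ => exp (-(r * x / (1 - r))) * (1 + k * (1 - r)) ^ (-(α + 1)) *
      ((r * x / (1 - r) / (1 + k * (1 - r))) ^ m / m.factorial))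
      (exp (-(r * x / (1 - r))) * (1 + k * (1 - r)) ^ (-(α + 1)) *
        exp (r * x / (1 - r) / (1 + k * (1 - r)))) := by
    refine HasSum.mul_left _ ?_
    rw [exp_eq_exp_ℝ]
    exact NormedSpace.expSeries_div_hasSum_exp _
  rw [← ENNReal.ofReal_tsum_of_nonneg (fun m => by positivity) hs.summable, hs.tsum_eq]
  congr 1
  rw [mul_comm (exp _), mul_assoc, ← exp_add]
  congr 2
  field_simp
  ring

theorem heatFactor_symm {α r x y : ℝ} (hr1 : r < 1) (hx : 0 < x)
    (hy : 0 < y) :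
    ENNReal.ofReal (x ^ α * exp (-x)) * heatFactor α r x y =
      ENNReal.ofReal (y ^ α * exp (-y)) * heatFactor α r y x := by
  have h1 : 0 < 1 - r := by linarith
  unfold heatFactor
  rw [← ENNReal.tsum_mul_left, ← ENNReal.tsum_mul_left]
  congr 1
  ext1 m
  rw [← ENNReal.ofReal_mul (by positivity), ← ENNReal.ofReal_mul (by positivity)]
  congr 1
  have e : ∀ u : ℝ, exp (-u) * exp (-(r * u / (1 - r))) = exp (-(u / (1 - r))) := by
    intro u
    rw [← exp_add]; congr 1; field_simp; ring
  unfold heatTerm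
  rw [rpow_add hx, rpow_add hy, rpow_natCast, rpow_natCast, ← e x, ← e y, div_pow, div_pow, mul_pow,
    mul_pow]
  ring

/-- The multiplier turning `exp (-k y)` into its image under the Laguerre heat semigroup. -/
noncomputable def heatLaplace {d : ℕ} (α k : Fin d → ℝ) (s : ℝ) (x : Fin d → ℝ) : ℝ :=
  ∏ j, ((1 + k j * (1 - exp (-s))) ^ (-(α j + 1)) *
    exp (-(exp (-s) * k j * x j / (1 + k j * (1 - exp (-s))))))

/-- Replaces nonpositive times by `1`. -/
noncomputable def posTime (s : ℝ) : ℝ := if 0 < s then s else 1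

theorem posTime_pos (s : ℝ) : 0 < posTime s := by
  unfold posTime; split_ifs <;> simp_all

theorem posTime_of_pos {s : ℝ} (hs : 0 < s) : posTime s = s := if_pos hs

theorem measurable_posTime : Measurable posTime :=
  Measurable.ite measurableSet_Ioi measurable_id measurable_const

/-- The density of the `d`-dimensional Laguerre heat kernel, extended to all times and points. -/
noncomputable def heatDensity {d : ℕ} (α : Fin d → ℝ) (p : ℝ × (Fin d → ℝ)) (y : Fin d → ℝ) :
    ENNReal :=
  ∏ j, heatFactor (α j) (exp (-posTime p.1)) |p.2 j| (y j)

theorem measurable_heatFactor (α : ℝ) :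
    Measurable fun q : ℝ × ℝ × ℝ => heatFactor α q.1 q.2.1 q.2.2 := by
  unfold heatFactor heatTerm
  fun_prop

theorem measurable_heatDensity {d : ℕ} (α : Fin d → ℝ) :
    Measurable (Function.uncurry (heatDensity α)) := by
  have h1 := measurable_posTime
  have h : ∀ j, Measurable fun q : (ℝ × (Fin d → ℝ)) × (Fin d → ℝ) =>
      (exp (-posTime q.1.1), |q.1.2 j|, q.2 j) := by
    intro j
    have h2 : Measurable fun q : (ℝ × (Fin d → ℝ)) × (Fin d → ℝ) => q.1.2 j :=
      (measurable_pi_apply j).comp (measurable_snd.comp measurable_fst)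
    have h3 : Measurable fun q : (ℝ × (Fin d → ℝ)) × (Fin d → ℝ) => q.2 j :=
      (measurable_pi_apply j).comp measurable_snd
    exact ((h1.comp (measurable_fst.comp measurable_fst)).neg.exp).prodMk
      ((continuous_abs.measurable.comp h2).prodMk h3)
  change Measurable fun q : (ℝ × (Fin d → ℝ)) × (Fin d → ℝ) =>
    ∏ j, heatFactor (α j) (exp (-posTime q.1.1)) |q.1.2 j| (q.2 j)
  refine Finset.measurable_fun_prod _ fun j _ => ?_
  have := (measurable_heatFactor (α j)).comp (h j)
  simpa only [Function.comp_def] using this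

theorem volume_restrict_posOrthant (d : ℕ) :
    (volume : Measure (Fin d → ℝ)).restrict (posOrthant d) =
      Measure.pi fun _ => (volume : Measure ℝ).restrict (Ioi 0) := by
  rw [posOrthant, volume_pi, Measure.restrict_pi_pi]

theorem measurableSet_posOrthant (d : ℕ) : MeasurableSet (posOrthant d) :=
  MeasurableSet.univ_pi fun _ => measurableSet_Ioi

theorem mem_posOrthant {d : ℕ} {x : Fin d → ℝ} : x ∈ posOrthant d ↔ ∀ j, 0 < x j := by
  simp [posOrthant]

/-- The Laguerre heat semigroup as a Markov kernel. -/
noncomputable def heatKernel {d : ℕ} (α : Fin d → ℝ) : Kernel (ℝ × (Fin d → ℝ)) (Fin d → ℝ) :=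
  Kernel.withDensity (Kernel.const _ (volume.restrict (posOrthant d))) (heatDensity α)

theorem heatKernel_apply {d : ℕ} (α : Fin d → ℝ) (p : ℝ × (Fin d → ℝ)) :
    heatKernel α p = (volume.restrict (posOrthant d)).withDensity (heatDensity α p) := by
  rw [heatKernel, Kernel.withDensity_apply _ (measurable_heatDensity α), Kernel.const_apply]

theorem lintegral_heatKernel {d : ℕ} (α : Fin d → ℝ) (p : ℝ × (Fin d → ℝ))
    {g : (Fin d → ℝ) → ENNReal} (hg : Measurable g) :
    ∫⁻ y, g y ∂heatKernel α p = ∫⁻ y in posOrthant d, heatDensity α p y * g y := by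
  rw [heatKernel_apply, lintegral_withDensity_eq_lintegral_mul _
    (measurable_heatDensity α).of_uncurry_left hg]
  rfl

theorem lintegral_exp_heatKernel {d : ℕ} {α : Fin d → ℝ} (hα : ∀ j, -1 < α j)
    {k : Fin d → ℝ} (hk : ∀ j, 0 ≤ k j) (p : ℝ × (Fin d → ℝ)) :
    ∫⁻ y, ENNReal.ofReal (exp (-∑ j, k j * y j)) ∂heatKernel α p =
      ENNReal.ofReal (heatLaplace α k (posTime p.1) fun j => |p.2 j|) := by
  have hr : exp (-posTime p.1) < 1 := by simpa using posTime_pos p.1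
  rw [lintegral_heatKernel _ _ (by fun_prop), volume_restrict_posOrthant]
  have : ∀ y : Fin d → ℝ, heatDensity α p y * ENNReal.ofReal (exp (-∑ j, k j * y j)) =
      ∏ j, (heatFactor (α j) (exp (-posTime p.1)) |p.2 j| (y j) *
        ENNReal.ofReal (exp (-(k j * y j)))) := by
    intro y
    rw [Finset.prod_mul_distrib, ← ENNReal.ofReal_prod_of_nonneg (fun _ _ => (exp_pos _).le),
      ← exp_sum, Finset.sum_neg_distrib, heatDensity]
  simp_rw [this]
  rw [lintegral_pi_prod_eq_prod (F := fun j y => heatFactor (α j) (exp (-posTime p.1)) |p.2 j| y *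
        ENNReal.ofReal (exp (-(k j * y)))), heatLaplace, ENNReal.ofReal_prod_of_nonneg]
  · refine Finset.prod_congr rfl fun j _ => ?_
    exact lintegral_heatFactor_mul_exp (hα j) (exp_pos _) hr (abs_nonneg _) (hk j)
  · intro j _
    have : 0 ≤ k j * (1 - exp (-posTime p.1)) := mul_nonneg (hk j) (by linarith)
    positivity
  · intro j
    have h : Measurable fun y : ℝ => (exp (-posTime p.1), |p.2 j|, y) :=
      measurable_const.prodMk (measurable_const.prodMk measurable_id)
    exact ((measurable_heatFactor (α j)).comp h).mul (by fun_prop)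

theorem isMarkovKernel_heatKernel {d : ℕ} {α : Fin d → ℝ} (hα : ∀ j, -1 < α j) :
    IsMarkovKernel (heatKernel α) := by
  refine ⟨fun p => ⟨?_⟩⟩
  have := lintegral_exp_heatKernel hα (k := 0) (fun _ => le_rfl) p
  simpa [heatLaplace] using this

theorem ae_heatKernel_of_ae {d : ℕ} (α : Fin d → ℝ) (p : ℝ × (Fin d → ℝ))
    {q : (Fin d → ℝ) → Prop} (hq : ∀ᵐ y ∂volume.restrict (posOrthant d), q y) :
    ∀ᵐ y ∂heatKernel α p, q y := by
  rw [heatKernel_apply]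
  exact (withDensity_absolutelyContinuous _ _).ae_le hq

theorem heatLaplace_nonneg {d : ℕ} (α : Fin d → ℝ) {k : Fin d → ℝ} (hk : ∀ j, 0 ≤ k j) {s : ℝ}
    (hs : 0 ≤ s) (x : Fin d → ℝ) : 0 ≤ heatLaplace α k s x := by
  refine Finset.prod_nonneg fun j _ => ?_
  have h1 : exp (-s) ≤ 1 := by simpa using hs
  have : 0 ≤ k j * (1 - exp (-s)) := mul_nonneg (hk j) (by linarith)
  positivity

/-- The Chapman–Kolmogorov identity tested on exponentials. -/
theorem lintegral_heatLaplace_heatKernel {d : ℕ} {α : Fin d → ℝ} (hα : ∀ j, -1 < α j)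
    {k : Fin d → ℝ} (hk : ∀ j, 0 ≤ k j) {s s' : ℝ} (hs : 0 < s) (hs' : 0 < s')
    (x : Fin d → ℝ) :
    ∫⁻ z, ENNReal.ofReal (heatLaplace α k s' fun j => |z j|) ∂heatKernel α (s, x) =
      ENNReal.ofReal (heatLaplace α k (s + s') fun j => |x j|) := by
  have h1 : exp (-s) < 1 := by simpa using hs
  have h1' : exp (-s') < 1 := by simpa using hs'
  have hr := exp_pos (-s)
  have hr' := exp_pos (-s')
  set r := exp (-s)
  set r' := exp (-s')
  have hN' : ∀ j, 0 < 1 + k j * (1 - r') := fun j => by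
    have : 0 ≤ k j * (1 - r') := mul_nonneg (hk j) (by linarith)
    linarith
  let k' : Fin d → ℝ := fun j => r' * k j / (1 + k j * (1 - r'))
  have hk' : ∀ j, 0 ≤ k' j := fun j => by
    have := hN' j; have := hk j; positivity
  let B : ℝ := ∏ j, (1 + k j * (1 - r')) ^ (-(α j + 1))
  have hB : 0 ≤ B := Finset.prod_nonneg fun j _ => by have := hN' j; positivity
  have hpt : ∀ᵐ z ∂heatKernel α (s, x), ENNReal.ofReal (heatLaplace α k s' fun j => |z j|) =
      ENNReal.ofReal B * ENNReal.ofReal (exp (-∑ j, k' j * z j)) := by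
    refine ae_heatKernel_of_ae _ _ ?_
    filter_upwards [ae_restrict_mem (measurableSet_posOrthant d)] with z hz
    rw [← ENNReal.ofReal_mul hB, heatLaplace, Finset.prod_mul_distrib, ← Finset.sum_neg_distrib,
      exp_sum]
    congr 2
    refine Finset.prod_congr rfl fun j _ => ?_
    rw [abs_of_pos (mem_posOrthant.1 hz j)]
    congr 2
    simp only [k', r']
    ring
  rw [lintegral_congr_ae hpt, lintegral_const_mul _ (by fun_prop), lintegral_exp_heatKernel hα hk',
    ← ENNReal.ofReal_mul hB]
  congr 1
  simp only [posTime_of_pos hs, heatLaplace, B]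
  rw [← Finset.prod_mul_distrib]
  refine Finset.prod_congr rfl fun j _ => ?_
  have hrr : exp (-(s + s')) = r * r' := by rw [← exp_add]; congr 1; ring
  have hN := hN' j
  have hN2 : 0 < 1 + k j * (1 - r * r') := by
    have : r * r' < 1 := by nlinarith
    have : 0 ≤ k j * (1 - r * r') := mul_nonneg (hk j) (by linarith)
    linarith
  have e1 : 1 + k' j * (1 - r) = (1 + k j * (1 - r * r')) / (1 + k j * (1 - r')) := by
    simp only [k']
    field_simp
    ring
  rw [hrr, ← mul_assoc, e1, ← mul_rpow hN.le (by positivity), mul_div_cancel₀ _ hN.ne']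
  congr 3
  simp only [k', show exp (-s) = r from rfl]
  field_simp

theorem sFinite_subMeasure (t : ℝ) : SFinite (subMeasure t) := by
  unfold subMeasure; infer_instance

/-- The Poisson–Laguerre semigroup, obtained by subordination from the heat semigroup. -/
noncomputable def laguerrePoisson {d : ℕ} (α : Fin d → ℝ) (t : ℝ) :
    Kernel (Fin d → ℝ) (Fin d → ℝ) :=
  heatKernel α ∘ₖ (Kernel.const _ (subMeasure t) ×ₖ Kernel.id)

theorem isMarkovKernel_laguerrePoisson {d : ℕ} {α : Fin d → ℝ} (hα : ∀ j, -1 < α j) {t : ℝ}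
    (ht : 0 < t) : IsMarkovKernel (laguerrePoisson α t) := by
  have := isProbabilityMeasure_subMeasure ht
  have := isMarkovKernel_heatKernel hα
  unfold laguerrePoisson
  infer_instance

theorem measurable_lintegral_heatKernel {d : ℕ} (α : Fin d → ℝ) {g : (Fin d → ℝ) → ENNReal}
    (hg : Measurable g) : Measurable fun p => ∫⁻ y, g y ∂heatKernel α p :=
  hg.lintegral_kernel

theorem lintegral_laguerrePoisson {d : ℕ} (α : Fin d → ℝ) (t : ℝ) (x : Fin d → ℝ)
    {g : (Fin d → ℝ) → ENNReal} (hg : Measurable g) :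
    ∫⁻ y, g y ∂laguerrePoisson α t x = ∫⁻ s, ∫⁻ y, g y ∂heatKernel α (s, x) ∂subMeasure t := by
  have := sFinite_subMeasure t
  rw [laguerrePoisson, Kernel.lintegral_comp _ _ _ hg, Kernel.prod_apply, Kernel.const_apply,
    Kernel.id_apply, Measure.prod_dirac, lintegral_map (measurable_lintegral_heatKernel α hg)
    measurable_prodMk_right]

theorem ae_laguerrePoisson_of_ae {d : ℕ} (α : Fin d → ℝ) (t : ℝ) (x : Fin d → ℝ)
    {q : (Fin d → ℝ) → Prop} (hq : ∀ᵐ y ∂volume.restrict (posOrthant d), q y) :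
    ∀ᵐ y ∂laguerrePoisson α t x, q y := by
  have h0 : volume.restrict (posOrthant d) (toMeasurable (volume.restrict (posOrthant d))
      {y | ¬ q y}) = 0 := by
    rw [measure_toMeasurable]; exact hq
  change laguerrePoisson α t x {y | ¬ q y} = 0
  refine measure_mono_null (subset_toMeasurable (volume.restrict (posOrthant d)) _) ?_
  set S := toMeasurable (volume.restrict (posOrthant d)) {y | ¬ q y}
  have hS : MeasurableSet S := measurableSet_toMeasurable _ _
  rw [← lintegral_indicator_one hS, lintegral_laguerrePoisson _ _ _
    (measurable_one.indicator hS)]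
  simp_rw [lintegral_indicator_one hS]
  have : ∀ s, heatKernel α (s, x) S = 0 := fun s => by
    rw [heatKernel_apply]
    exact withDensity_absolutelyContinuous _ _ h0
  simp [this]

/-- The heat semigroup acting on functions. -/
noncomputable def heatOp {d : ℕ} (α : Fin d → ℝ) (f : (Fin d → ℝ) → ℝ)
    (p : ℝ × (Fin d → ℝ)) : ℝ := ∫ y, f y ∂heatKernel α p

/-- The Poisson semigroup acting on functions. -/
noncomputable def poissonOp {d : ℕ} (α : Fin d → ℝ) (t : ℝ) (f : (Fin d → ℝ) → ℝ)
    (x : Fin d → ℝ) : ℝ := ∫ y, f y ∂laguerrePoisson α t x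

theorem measurable_heatOp {d : ℕ} (α : Fin d → ℝ) {f : (Fin d → ℝ) → ℝ} (hf : Measurable f) :
    Measurable (heatOp α f) :=
  hf.stronglyMeasurable.integral_kernel.measurable

theorem abs_integral_le_of_prob {Ω : Type*} [MeasurableSpace Ω] {μ : Measure Ω}
    [IsProbabilityMeasure μ] {f : Ω → ℝ} {M : ℝ} (hM : ∀ᵐ y ∂μ, |f y| ≤ M) :
    |∫ y, f y ∂μ| ≤ M := by
  simpa using norm_integral_le_of_norm_le_const (f := f) (C := M) hM

theorem abs_heatOp_le {d : ℕ} {α : Fin d → ℝ} (hα : ∀ j, -1 < α j) {f : (Fin d → ℝ) → ℝ} {M : ℝ}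
    (hM : ∀ y, |f y| ≤ M) (p : ℝ × (Fin d → ℝ)) : |heatOp α f p| ≤ M := by
  have := isMarkovKernel_heatKernel hα
  exact abs_integral_le_of_prob (Filter.Eventually.of_forall hM)

theorem integrable_laguerrePoisson {d : ℕ} {α : Fin d → ℝ} (hα : ∀ j, -1 < α j) {t : ℝ}
    (ht : 0 < t) {f : (Fin d → ℝ) → ℝ} {M : ℝ} (hf : Measurable f) (hM : ∀ y, |f y| ≤ M)
    (x : Fin d → ℝ) : Integrable f (laguerrePoisson α t x) := by
  have := isMarkovKernel_laguerrePoisson hα ht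
  exact Integrable.of_bound hf.aestronglyMeasurable M (Filter.Eventually.of_forall hM)

theorem abs_poissonOp_le {d : ℕ} {α : Fin d → ℝ} (hα : ∀ j, -1 < α j) {t : ℝ} (ht : 0 < t)
    {f : (Fin d → ℝ) → ℝ} {M : ℝ} (x : Fin d → ℝ)
    (hM : ∀ y ∈ posOrthant d, |f y| ≤ M) : |poissonOp α t f x| ≤ M := by
  have := isMarkovKernel_laguerrePoisson hα ht
  exact abs_integral_le_of_prob (ae_laguerrePoisson_of_ae _ _ _
    ((ae_restrict_mem (measurableSet_posOrthant d)).mono hM))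

theorem poissonOp_congr {d : ℕ} (α : Fin d → ℝ) (t : ℝ) {f g : (Fin d → ℝ) → ℝ}
    (hfg : ∀ᵐ y ∂volume.restrict (posOrthant d), f y = g y) (x : Fin d → ℝ) :
    poissonOp α t f x = poissonOp α t g x :=
  integral_congr_ae (ae_laguerrePoisson_of_ae _ _ _ hfg)

theorem integral_subMeasure {t : ℝ} (ht : 0 ≤ t) (L : ℝ → ℝ) :
    ∫ s, L s ∂subMeasure t = ∫ s in Ioi 0, subDensity t s * L s := by
  rw [subMeasure, integral_withDensity_eq_integral_toReal_smul
    (measurable_subDensity_right t).ennreal_ofReal (by simp)]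
  refine setIntegral_congr_fun measurableSet_Ioi fun s hs => ?_
  simp only [smul_eq_mul]
  rw [ENNReal.toReal_ofReal (subDensity_nonneg ht (le_of_lt hs))]

theorem poissonOp_eq {d : ℕ} {α : Fin d → ℝ} (hα : ∀ j, -1 < α j) {t : ℝ} (ht : 0 < t)
    {f : (Fin d → ℝ) → ℝ} {M : ℝ} (hf : Measurable f) (hM : ∀ y, |f y| ≤ M) (x : Fin d → ℝ) :
    poissonOp α t f x = ∫ s in Ioi 0, subDensity t s * heatOp α f (s, x) := by
  have := sFinite_subMeasure t
  have hi := integrable_laguerrePoisson hα ht hf hM x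
  rw [poissonOp]
  unfold laguerrePoisson at hi ⊢
  rw [Kernel.integral_comp hi, Kernel.prod_apply, Kernel.const_apply,
    Kernel.id_apply, Measure.prod_dirac]
  change ∫ p, heatOp α f p ∂_ = _
  rw [integral_map measurable_prodMk_right.aemeasurable
    (measurable_heatOp α hf).aestronglyMeasurable, integral_subMeasure ht.le]

theorem measurable_poissonOp {d : ℕ} {α : Fin d → ℝ} (hα : ∀ j, -1 < α j)
    {f : (Fin d → ℝ) → ℝ} {M : ℝ} (hf : Measurable f) (hM : ∀ y, |f y| ≤ M) :
    ∃ G : ℝ × (Fin d → ℝ) → ℝ, Measurable G ∧ ∀ t > 0, ∀ x, G (t, x) = poissonOp α t f x := by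
  refine ⟨fun p => ∫ s in Ioi 0, subDensity p.1 s * heatOp α f (s, p.2), ?_,
    fun t ht x => (poissonOp_eq hα ht hf hM x).symm⟩
  have h1 : Measurable fun q : (ℝ × (Fin d → ℝ)) × ℝ => subDensity q.1.1 q.2 :=
    measurable_subDensity.comp ((measurable_fst.comp measurable_fst).prodMk measurable_snd)
  have h2 : Measurable fun q : (ℝ × (Fin d → ℝ)) × ℝ => heatOp α f (q.2, q.1.2) :=
    (measurable_heatOp α hf).comp (measurable_snd.prodMk (measurable_snd.comp measurable_fst))
  exact (h1.mul h2).stronglyMeasurable.integral_prod_right.measurable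

theorem measurable_poissonOp_right {d : ℕ} (α : Fin d → ℝ) (t : ℝ)
    {f : (Fin d → ℝ) → ℝ} (hf : Measurable f) : Measurable (poissonOp α t f) :=
  hf.stronglyMeasurable.integral_kernel.measurable

theorem exists_hasDerivAt_poissonOp {d : ℕ} {α : Fin d → ℝ} (hα : ∀ j, -1 < α j) {t : ℝ}
    (ht : 0 < t) {f : (Fin d → ℝ) → ℝ} {M : ℝ} (hf : Measurable f) (hM : ∀ y, |f y| ≤ M)
    (x : Fin d → ℝ) :
    ∃ U', HasDerivAt (fun u => poissonOp α u f x) U' t ∧ |U'| ≤ 6 * M / t := by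
  obtain ⟨U', h1, h2⟩ := exists_hasDerivAt_integral_subDensity (F := fun s => heatOp α f (s, x))
    ((measurable_heatOp α hf).comp measurable_prodMk_right) (fun s => abs_heatOp_le hα hM _) ht
  refine ⟨U', h1.congr_of_eventuallyEq ?_, h2⟩
  filter_upwards [lt_mem_nhds ht] with u hu
  exact poissonOp_eq hα hu hf hM x

theorem measurable_heatLaplace {d : ℕ} (α k : Fin d → ℝ) :
    Measurable fun p : ℝ × (Fin d → ℝ) => heatLaplace α k p.1 p.2 := by
  unfold heatLaplace
  refine Finset.measurable_fun_prod _ fun j _ => ?_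
  have h2 : Measurable fun q : ℝ × (Fin d → ℝ) => q.2 j :=
      (measurable_pi_apply j).comp measurable_snd
  fun_prop

theorem measurable_ofReal_heatLaplace {d : ℕ} (α k : Fin d → ℝ) :
    Measurable fun p : ℝ × (Fin d → ℝ) => ENNReal.ofReal (heatLaplace α k p.1 fun j => |p.2 j|) := by
  have h : Measurable fun p : ℝ × (Fin d → ℝ) => (p.1, fun j => |p.2 j|) :=
    measurable_fst.prodMk (measurable_pi_lambda _ fun j => continuous_abs.measurable.comp
      ((measurable_pi_apply j).comp measurable_snd))
  have h2 := ((measurable_heatLaplace α k).comp h).ennreal_ofReal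
  simpa only [Function.comp_def] using h2

theorem lintegral_exp_laguerrePoisson {d : ℕ} {α : Fin d → ℝ} (hα : ∀ j, -1 < α j) (t : ℝ)
    {k : Fin d → ℝ} (hk : ∀ j, 0 ≤ k j) (x : Fin d → ℝ) :
    ∫⁻ y, ENNReal.ofReal (exp (-∑ j, k j * y j)) ∂laguerrePoisson α t x =
      ∫⁻ s, ENNReal.ofReal (heatLaplace α k s fun j => |x j|) ∂subMeasure t := by
  rw [lintegral_laguerrePoisson _ _ _ (by fun_prop)]
  refine lintegral_congr_ae ?_
  filter_upwards [ae_subMeasure_pos t] with s hs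
  rw [lintegral_exp_heatKernel hα hk, posTime_of_pos hs]

/-- The semigroup property of the Poisson kernels. -/
theorem laguerrePoisson_comp {d : ℕ} {α : Fin d → ℝ} (hα : ∀ j, -1 < α j) {a b : ℝ} (ha : 0 < a)
    (hb : 0 < b) (x : Fin d → ℝ) :
    (laguerrePoisson α b ∘ₖ laguerrePoisson α a) x = laguerrePoisson α (a + b) x := by
  have := isMarkovKernel_laguerrePoisson hα ha
  have := isMarkovKernel_laguerrePoisson hα hb
  have := isMarkovKernel_laguerrePoisson hα (add_pos ha hb)
  have := isProbabilityMeasure_subMeasure ha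
  have := isProbabilityMeasure_subMeasure hb
  have := isProbabilityMeasure_subMeasure (add_pos ha hb)
  have hpos : ∀ t (z : Fin d → ℝ), ∀ᵐ y ∂laguerrePoisson α t z, ∀ i, 0 < y i := fun t z =>
    ae_laguerrePoisson_of_ae _ _ _ ((ae_restrict_mem (measurableSet_posOrthant d)).mono
      fun y hy => mem_posOrthant.1 hy)
  refine ext_of_laplace ?_ (hpos _ _) fun k => ?_
  · have hm : MeasurableSet {y : Fin d → ℝ | ∀ i, 0 < y i} := by
      have := measurableSet_posOrthant d
      convert this using 1
      ext y; simp [mem_posOrthant]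
    exact (Kernel.ae_comp_iff hm).2 (Filter.Eventually.of_forall fun z => hpos b z)
  · have hk : ∀ j, (0 : ℝ) ≤ k j := fun j => Nat.cast_nonneg _
    rw [Kernel.lintegral_comp _ _ _ (by fun_prop)]
    simp_rw [lintegral_exp_laguerrePoisson hα _ hk]
    have hsw : Measurable fun q : (Fin d → ℝ) × ℝ => ENNReal.ofReal
        (heatLaplace α (fun j => (k j : ℝ)) q.2 fun j => |q.1 j|) := by
      have := (measurable_ofReal_heatLaplace α fun j => (k j : ℝ)).comp
        (measurable_swap (α := Fin d → ℝ) (β := ℝ))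
      simpa only [Function.comp_def, Prod.fst_swap, Prod.snd_swap] using this
    have hsx : Measurable fun s : ℝ => ENNReal.ofReal
        (heatLaplace α (fun j => (k j : ℝ)) s fun j => |x j|) := by
      have := (measurable_ofReal_heatLaplace α fun j => (k j : ℝ)).comp
        (measurable_prodMk_right (y := x) (α := ℝ))
      simpa only [Function.comp_def] using this
    have hinteg : Measurable fun z : Fin d → ℝ => ∫⁻ s, ENNReal.ofReal
        (heatLaplace α (fun j => (k j : ℝ)) s fun j => |z j|) ∂subMeasure b :=
      hsw.lintegral_prod_right'
    rw [lintegral_laguerrePoisson _ _ _ hinteg, ← subMeasure_conv ha hb, Measure.lintegral_conv hsx]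
    refine lintegral_congr_ae ?_
    filter_upwards [ae_subMeasure_pos a] with s hs
    have := isMarkovKernel_heatKernel hα
    rw [lintegral_lintegral_swap (f := fun (z : Fin d → ℝ) s => ENNReal.ofReal
        (heatLaplace α (fun j => (k j : ℝ)) s fun j => |z j|)) hsw.aemeasurable]
    refine lintegral_congr_ae ?_
    filter_upwards [ae_subMeasure_pos b] with s' hs'
    exact lintegral_heatLaplace_heatKernel hα hk hs hs' x

theorem poissonOp_poissonOp {d : ℕ} {α : Fin d → ℝ} (hα : ∀ j, -1 < α j) {a b : ℝ} (ha : 0 < a)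
    (hb : 0 < b) {f : (Fin d → ℝ) → ℝ} {M : ℝ} (hf : Measurable f) (hM : ∀ y, |f y| ≤ M)
    (x : Fin d → ℝ) :
    poissonOp α a (poissonOp α b f) x = poissonOp α (a + b) f x := by
  have h := integrable_laguerrePoisson hα (add_pos ha hb) hf hM x
  have e : poissonOp α (a + b) f x = ∫ y, f y ∂((laguerrePoisson α b ∘ₖ laguerrePoisson α a) x) := by
    rw [laguerrePoisson_comp hα ha hb]; rfl
  rw [← laguerrePoisson_comp hα ha hb] at h
  rw [e, Kernel.integral_comp h]
  rfl

theorem summable_heatTerm {α : ℝ} (hα : -1 < α) {r x y : ℝ} (hr : 0 < r) (hr1 : r < 1) (hx : 0 < x)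
    (hy : 0 < y) : Summable (heatTerm α r x y) := by
  have h1 : 0 < 1 - r := by linarith
  set c := min (Gamma (α + 1)) (Gamma (α + 2)) with hc
  have hcpos : 0 < c := lt_min (Gamma_pos_of_pos (by linarith)) (Gamma_pos_of_pos (by linarith))
  have hΓ1 : ∀ m : ℕ, Gamma (α + 2) ≤ Gamma ((m : ℝ) + α + 2) := by
    intro m
    induction m with
    | zero => simp
    | succ m ih =>
      have hm := m.cast_nonneg (α := ℝ)
      have := Gamma_add_one (s := (m : ℝ) + α + 2) (by linarith)
      have e : ((m + 1 : ℕ) : ℝ) + α + 2 = (m : ℝ) + α + 2 + 1 := by push_cast; ring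
      rw [e, this]
      nlinarith [Gamma_pos_of_pos (show 0 < (m : ℝ) + α + 2 by linarith)]
  have hΓ : ∀ m : ℕ, c ≤ Gamma ((m : ℝ) + α + 1) := by
    rintro (_ | m)
    · simp [hc]
    · refine (min_le_right _ _).trans ((hΓ1 m).trans_eq ?_)
      congr 1; push_cast; ring
  have hs := (summable_pow_div_factorial (r * x / (1 - r) * (y / (1 - r)))).mul_left
    (exp (-(r * x / (1 - r))) * (y ^ α * exp (-(y / (1 - r))) / (1 - r) ^ (α + 1)) / c)
  refine Summable.of_nonneg_of_le (heatTerm_nonneg hα hr hr1 hx.le hy.le) (fun m => ?_) hs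
  have hG := Gamma_pos_of_pos (show 0 < (m : ℝ) + α + 1 by
    have := m.cast_nonneg (α := ℝ); linarith)
  have e : heatTerm α r x y m = exp (-(r * x / (1 - r))) *
      (y ^ α * exp (-(y / (1 - r))) / (1 - r) ^ (α + 1)) / Gamma ((m : ℝ) + α + 1) *
      ((r * x / (1 - r) * (y / (1 - r))) ^ m / m.factorial) := by
    unfold heatTerm
    rw [rpow_add hy, add_assoc (m : ℝ), rpow_add h1, rpow_natCast, rpow_natCast, mul_pow, div_pow y]
    field_simp
  rw [e]
  gcongr
  exact hΓ m

theorem besselI_term_eq_heatTerm (α : ℝ) {r x y : ℝ} (hr : 0 < r) (hr1 : r < 1) (hx : 0 < x)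
    (hy : 0 < y) (m : ℕ) :
    1 / (1 - r) * ((y / x) ^ (α / 2) * exp (-((r * x + y) / (1 - r)) - α * log r / 2)) *
      ((2 * √(r * x * y) / (1 - r) / 2) ^ (2 * (m : ℝ) + α) /
        (m.factorial * Gamma ((m : ℝ) + α + 1))) = heatTerm α r x y m := by
  have h1 : 0 < 1 - r := by linarith
  have e1 : exp (-((r * x + y) / (1 - r)) - α * log r / 2) =
      exp (-(r * x / (1 - r))) * exp (-(y / (1 - r))) * exp (-(α * log r / 2)) := by
    rw [← exp_add, ← exp_add]; congr 1; field_simp; ring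
  have e2 : 2 * √(r * x * y) / (1 - r) / 2 = √(r * x * y) / (1 - r) := by ring
  rw [e1, e2, heatTerm]
  have key : (y / x) ^ (α / 2) * exp (-(α * log r / 2)) *
      (√(r * x * y) / (1 - r)) ^ (2 * (m : ℝ) + α) / (1 - r) =
      (r * x / (1 - r)) ^ m * y ^ ((m : ℝ) + α) / (1 - r) ^ ((m : ℝ) + α + 1) := by
    have ex : x = exp (log x) := (exp_log hx).symm
    have ey : y = exp (log y) := (exp_log hy).symm
    have er : r = exp (log r) := (exp_log hr).symm
    have eq : 1 - r = exp (log (1 - r)) := (exp_log h1).symm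
    rw [eq]
    generalize log (1 - r) = Q
    rw [ex, ey]
    generalize log x = X at *
    generalize log y = Y at *
    rw [show r * exp X * exp Y = exp (log r) * exp X * exp Y by rw [← er],
      show r * exp X = exp (log r) * exp X by rw [← er]]
    generalize log r = R at *
    rw [sqrt_eq_rpow]
    simp only [← exp_add, ← exp_sub, ← exp_mul, ← rpow_natCast]
    congr 1
    ring
  calc _ = exp (-(r * x / (1 - r))) * exp (-(y / (1 - r))) / (m.factorial * Gamma ((m : ℝ) + α + 1)) *
        ((y / x) ^ (α / 2) * exp (-(α * log r / 2)) *
      (√(r * x * y) / (1 - r)) ^ (2 * (m : ℝ) + α) / (1 - r)) := by ring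
    _ = _ := by rw [key]; ring

theorem besselI_eq_heatFactor {α : ℝ} (hα : -1 < α) {r x y : ℝ} (hr : 0 < r) (hr1 : r < 1)
    (hx : 0 < x) (hy : 0 < y) :
    1 / (1 - r) * ((y / x) ^ (α / 2) * exp (-((r * x + y) / (1 - r)) - α * log r / 2) *
      besselI α (2 * √(r * x * y) / (1 - r))) = (heatFactor α r x y).toReal := by
  rw [heatFactor, ← ENNReal.ofReal_tsum_of_nonneg (heatTerm_nonneg hα hr hr1 hx.le hy.le)
    (summable_heatTerm hα hr hr1 hx hy), ENNReal.toReal_ofReal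
    (tsum_nonneg (heatTerm_nonneg hα hr hr1 hx.le hy.le))]
  simp_rw [← besselI_term_eq_heatTerm α hr hr1 hx hy]
  rw [tsum_mul_left, besselI]
  ring

theorem heatFactor_ne_top {α : ℝ} (hα : -1 < α) {r x y : ℝ} (hr : 0 < r) (hr1 : r < 1)
    (hx : 0 < x) (hy : 0 < y) : heatFactor α r x y ≠ ⊤ := by
  rw [heatFactor, ← ENNReal.ofReal_tsum_of_nonneg (heatTerm_nonneg hα hr hr1 hx.le hy.le)
    (summable_heatTerm hα hr hr1 hx hy)]
  exact ENNReal.ofReal_ne_top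

theorem plKernel_eq {d : ℕ} {α : Fin d → ℝ} (hα : ∀ j, -1 < α j) {t : ℝ} (ht : 0 < t)
    {x y : Fin d → ℝ} (hx : x ∈ posOrthant d) (hy : y ∈ posOrthant d) :
    plKernel d α t x y =
      (∫⁻ s in Ioi 0, ENNReal.ofReal (subDensity t s) * heatDensity α (s, x) y).toReal := by
  rw [mem_posOrthant] at hx hy
  have himg : (fun s : ℝ => exp (-s)) '' Ioi 0 = Ioo 0 1 := by
    ext r
    simp only [mem_image, mem_Ioi, mem_Ioo]
    constructor
    · rintro ⟨s, hs, rfl⟩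
      exact ⟨exp_pos _, by simpa using hs⟩
    · rintro ⟨h0, h1⟩
      exact ⟨-log r, by simpa using log_neg h0 h1, by simp [exp_log h0]⟩
  have hm : Measurable fun s => ENNReal.ofReal (subDensity t s) * heatDensity α (s, x) y := by
    have h2 : Measurable fun s : ℝ => Function.uncurry (heatDensity α) ((s, x), y) :=
      (measurable_heatDensity α).comp (measurable_prodMk_right.prodMk measurable_const)
    exact (measurable_subDensity_right t).ennreal_ofReal.mul h2
  have hd : ∀ s ∈ Ioi (0 : ℝ), heatDensity α (s, x) y ≠ ⊤ := fun s hs => by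
    refine ENNReal.prod_ne_top fun j _ => ?_
    have hs1 : exp (-posTime s) < 1 := by simpa using posTime_pos s
    simp only [abs_of_pos (hx j)]
    exact heatFactor_ne_top (hα j) (exp_pos _) hs1 (hx j) (hy j)
  rw [← integral_toReal hm.aemeasurable ((ae_restrict_mem measurableSet_Ioi).mono fun s hs =>
    (ENNReal.mul_ne_top ENNReal.ofReal_ne_top (hd s hs)).lt_top), plKernel, ← himg,
    integral_image_eq_integral_abs_deriv_smul (f' := fun s => -exp (-s)) measurableSet_Ioi ?_ ?_,
    ← integral_const_mul]
  · refine setIntegral_congr_fun measurableSet_Ioi fun s hs => ?_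
    have hs0 : 0 < s := hs
    have hs1 : exp (-s) < 1 := by simpa using hs0
    have h1 : 0 < 1 - exp (-s) := by linarith
    simp only [log_exp, neg_neg, abs_neg, abs_of_pos (exp_pos _), smul_eq_mul, ENNReal.toReal_mul,
      ENNReal.toReal_ofReal (subDensity_nonneg ht.le hs0.le), heatDensity, ENNReal.toReal_prod,
      posTime_of_pos hs0, abs_of_pos (hx _)]
    simp_rw [← besselI_eq_heatFactor (hα _) (exp_pos (-s)) hs1 (hx _) (hy _)]
    rw [Finset.prod_mul_distrib (f := fun _ => 1 / (1 - exp (-s))), Finset.prod_const,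
      Finset.card_univ, Fintype.card_fin, subDensity]
    have e : t ^ 2 / (4 * -s) = -(t ^ 2 / (4 * s)) := by field_simp
    simp only [log_exp, one_div, inv_pow]
    rw [e]
    have := exp_pos (-s)
    field_simp
  · intro s _
    simpa using ((hasDerivAt_neg s).exp).hasDerivWithinAt
  · intro a _ b _ h
    simpa using h

theorem lintegral_subMeasure (t : ℝ) {L : ℝ → ENNReal} (hL : Measurable L) :
    ∫⁻ s, L s ∂subMeasure t = ∫⁻ s in Ioi 0, ENNReal.ofReal (subDensity t s) * L s := by
  rw [subMeasure, lintegral_withDensity_eq_lintegral_mul _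
        (measurable_subDensity_right t).ennreal_ofReal hL]
  rfl

theorem plP_eq_poissonOp {d : ℕ} {α : Fin d → ℝ} (hα : ∀ j, -1 < α j) {t : ℝ} (ht : 0 < t)
    (f : (Fin d → ℝ) → ℝ) {x : Fin d → ℝ} (hx : x ∈ posOrthant d) :
    plP d α t f x = poissonOp α t f x := by
  let k : (Fin d → ℝ) → ENNReal := fun y =>
    ∫⁻ s in Ioi 0, ENNReal.ofReal (subDensity t s) * heatDensity α (s, x) y
  have hm2 : Measurable fun q : (Fin d → ℝ) × ℝ =>
      ENNReal.ofReal (subDensity t q.2) * heatDensity α (q.2, x) q.1 := by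
    have h2 : Measurable fun q : (Fin d → ℝ) × ℝ =>
        Function.uncurry (heatDensity α) ((q.2, x), q.1) :=
      (measurable_heatDensity α).comp ((measurable_snd.prodMk measurable_const).prodMk
        measurable_fst)
    exact ((measurable_subDensity_right t).comp measurable_snd).ennreal_ofReal.mul h2
  have hms : ∀ y, Measurable fun s => ENNReal.ofReal (subDensity t s) * heatDensity α (s, x) y := by
    intro y
    have := hm2.comp (measurable_prodMk_left (x := y))
    simpa only [Function.comp_def] using this
  have hk : Measurable k := hm2.lintegral_prod_right'
  have hK : laguerrePoisson α t x = (volume.restrict (posOrthant d)).withDensity k := by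
    refine Measure.ext_of_lintegral _ fun g hg => ?_
    rw [lintegral_laguerrePoisson _ _ _ hg, lintegral_withDensity_eq_lintegral_mul _ hk hg,
      lintegral_subMeasure t (L := fun s => ∫⁻ y, g y ∂heatKernel α (s, x))
        ((measurable_lintegral_heatKernel α hg).comp measurable_prodMk_right)]
    simp_rw [Pi.mul_apply, lintegral_heatKernel _ _ hg]
    have h3 : ∀ s, Measurable fun y => heatDensity α (s, x) y * g y := fun s =>
      (measurable_heatDensity α).of_uncurry_left.mul hg
    simp_rw [← lintegral_const_mul _ (h3 _), ← mul_assoc]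
    rw [lintegral_lintegral_swap]
    · refine lintegral_congr fun y => ?_
      exact lintegral_mul_const _ (hms y)
    · have := (hm2.comp measurable_swap).mul (hg.comp (measurable_snd (α := ℝ)))
      simpa only [Function.comp_def, Prod.fst_swap, Prod.snd_swap, Function.uncurry_def, Pi.mul_def]
        using this.aemeasurable
  have hfin : ∀ᵐ y ∂volume.restrict (posOrthant d), k y < ⊤ := by
    have := isMarkovKernel_laguerrePoisson hα ht
    refine ae_lt_top hk ?_
    have h := measure_univ (μ := laguerrePoisson α t x)
    rw [hK, withDensity_apply _ MeasurableSet.univ, Measure.restrict_univ] at h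
    rw [h]; exact ENNReal.one_ne_top
  rw [plP, if_neg ht.ne', poissonOp, hK, integral_withDensity_eq_integral_toReal_smul hk hfin]
  refine setIntegral_congr_fun (measurableSet_posOrthant d) fun y hy => ?_
  simp only [smul_eq_mul, plKernel_eq hα ht hx hy, k]

/-- The Laguerre weight `∏ x_j ^ α_j * exp (-x_j)`. -/
noncomputable def laguerreWeight {d : ℕ} (α : Fin d → ℝ) (x : Fin d → ℝ) : ENNReal :=
  ∏ j, ENNReal.ofReal (x j ^ α j * exp (-x j))

theorem measurable_laguerreWeight {d : ℕ} (α : Fin d → ℝ) : Measurable (laguerreWeight α) := by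
  unfold laguerreWeight
  fun_prop

/-- The Laguerre measure on the positive orthant. -/
noncomputable def laguerreMeasure {d : ℕ} (α : Fin d → ℝ) : Measure (Fin d → ℝ) :=
  (volume.restrict (posOrthant d)).withDensity (laguerreWeight α)

theorem isFiniteMeasure_laguerreMeasure {d : ℕ} {α : Fin d → ℝ} (hα : ∀ j, -1 < α j) :
    IsFiniteMeasure (laguerreMeasure α) := by
  refine isFiniteMeasure_withDensity ?_
  rw [volume_restrict_posOrthant]
  unfold laguerreWeight
  rw [lintegral_pi_prod_eq_prod (F := fun j y => ENNReal.ofReal (y ^ α j * exp (-y)))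
    fun j => by fun_prop]
  refine ENNReal.prod_ne_top fun j _ => ?_
  have h := GammaIntegral_convergent (s := α j + 1) (by linarith [hα j])
  simp only [add_sub_cancel_right] at h
  refine ne_of_lt (lt_of_le_of_lt (lintegral_mono fun y => ?_) h.2)
  rw [mul_comm]
  exact ofReal_le_enorm _

theorem laguerreMeasure_pos {d : ℕ} (α : Fin d → ℝ) : ∀ᵐ y ∂laguerreMeasure α, y ∈ posOrthant d :=
  (withDensity_absolutelyContinuous _ _).ae_le (ae_restrict_mem (measurableSet_posOrthant d))

theorem absolutelyContinuous_laguerreMeasure {d : ℕ} (α : Fin d → ℝ) :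
    volume.restrict (posOrthant d) ≪ laguerreMeasure α := by
  refine withDensity_absolutelyContinuous' (measurable_laguerreWeight α).aemeasurable ?_
  filter_upwards [ae_restrict_mem (measurableSet_posOrthant d)] with y hy
  refine Finset.prod_ne_zero_iff.2 fun j _ => ?_
  have := mem_posOrthant.1 hy j
  simp only [ne_eq, ENNReal.ofReal_eq_zero, not_le]
  positivity

theorem heatDensity_symm {d : ℕ} (α : Fin d → ℝ) (s : ℝ) {x y : Fin d → ℝ}
    (hx : x ∈ posOrthant d) (hy : y ∈ posOrthant d) :
    laguerreWeight α x * heatDensity α (s, x) y = laguerreWeight α y * heatDensity α (s, y) x := by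
  rw [mem_posOrthant] at hx hy
  unfold laguerreWeight heatDensity
  rw [← Finset.prod_mul_distrib, ← Finset.prod_mul_distrib]
  refine Finset.prod_congr rfl fun j _ => ?_
  simp only [abs_of_pos (hx j), abs_of_pos (hy j)]
  exact heatFactor_symm (by simpa using posTime_pos s) (hx j) (hy j)

theorem lintegral_laguerreMeasure {d : ℕ} (α : Fin d → ℝ) {g : (Fin d → ℝ) → ENNReal}
    (hg : Measurable g) :
    ∫⁻ x, g x ∂laguerreMeasure α = ∫⁻ x in posOrthant d, laguerreWeight α x * g x := by
  rw [laguerreMeasure, lintegral_withDensity_eq_lintegral_mul _ (measurable_laguerreWeight α) hg]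
  rfl

theorem heatKernel_reversible {d : ℕ} (α : Fin d → ℝ) (s : ℝ) {φ g : (Fin d → ℝ) → ENNReal}
    (hφ : Measurable φ) (hg : Measurable g) :
    ∫⁻ x, φ x * ∫⁻ y, g y ∂heatKernel α (s, x) ∂laguerreMeasure α =
      ∫⁻ y, g y * ∫⁻ x, φ x ∂heatKernel α (s, y) ∂laguerreMeasure α := by
  have hK : ∀ {g : (Fin d → ℝ) → ENNReal}, Measurable g →
      Measurable fun x => ∫⁻ y, g y ∂heatKernel α (s, x) := fun hg =>
    (measurable_lintegral_heatKernel α hg).comp measurable_prodMk_left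
  rw [lintegral_laguerreMeasure α (hφ.fun_mul (hK hg)),
    lintegral_laguerreMeasure α (hg.fun_mul (hK hφ))]
  simp_rw [lintegral_heatKernel α _ hφ, lintegral_heatKernel α _ hg]
  have hd : ∀ z : Fin d → ℝ, Measurable (heatDensity α (s, z)) := fun z =>
    (measurable_heatDensity α).of_uncurry_left
  have hd2 : Measurable fun q : (Fin d → ℝ) × (Fin d → ℝ) =>
      Function.uncurry (heatDensity α) ((s, q.1), q.2) :=
    (measurable_heatDensity α).comp ((measurable_const.prodMk measurable_fst).prodMk measurable_snd)
  have hexp : ∀ {φ g : (Fin d → ℝ) → ENNReal}, Measurable g →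
      ∫⁻ x in posOrthant d, laguerreWeight α x *
        (φ x * ∫⁻ y in posOrthant d, heatDensity α (s, x) y * g y) =
      ∫⁻ x in posOrthant d, ∫⁻ y in posOrthant d,
        laguerreWeight α x * φ x * (heatDensity α (s, x) y * g y) := by
    intro φ g hg
    refine lintegral_congr fun x => ?_
    rw [← mul_assoc, lintegral_const_mul _ ((hd x).fun_mul hg)]
  rw [hexp hg, hexp hφ, lintegral_lintegral_swap]
  · refine setLIntegral_congr_fun (measurableSet_posOrthant d) fun y hy => ?_
    refine setLIntegral_congr_fun (measurableSet_posOrthant d) fun x hx => ?_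
    have := heatDensity_symm α s hx hy
    calc _ = (laguerreWeight α x * heatDensity α (s, x) y) * (φ x * g y) := by ring
      _ = _ := by rw [this]; ring
  · exact ((((measurable_laguerreWeight α).mul hφ).comp measurable_fst).mul
      (hd2.mul (hg.comp measurable_snd))).aemeasurable

theorem laguerrePoisson_reversible {d : ℕ} {α : Fin d → ℝ} (hα : ∀ j, -1 < α j) (t : ℝ)
    {φ g : (Fin d → ℝ) → ENNReal} (hφ : Measurable φ) (hg : Measurable g) :
    ∫⁻ x, φ x * ∫⁻ y, g y ∂laguerrePoisson α t x ∂laguerreMeasure α =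
      ∫⁻ y, g y * ∫⁻ x, φ x ∂laguerrePoisson α t y ∂laguerreMeasure α := by
  have := isFiniteMeasure_laguerreMeasure hα
  have := sFinite_subMeasure t
  have key : ∀ {φ g : (Fin d → ℝ) → ENNReal}, Measurable φ → Measurable g →
      ∫⁻ x, φ x * ∫⁻ y, g y ∂laguerrePoisson α t x ∂laguerreMeasure α =
        ∫⁻ s, ∫⁻ x, φ x * ∫⁻ y, g y ∂heatKernel α (s, x) ∂laguerreMeasure α ∂subMeasure t := by
    intro φ g hφ hg
    have h1 : Measurable fun q : (Fin d → ℝ) × ℝ => ∫⁻ y, g y ∂heatKernel α (q.2, q.1) :=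
      (measurable_lintegral_heatKernel α hg).comp measurable_swap
    simp_rw [lintegral_laguerrePoisson α t _ hg]
    rw [← lintegral_lintegral_swap (((hφ.comp measurable_fst).mul h1).aemeasurable)]
    refine lintegral_congr fun x => ?_
    rw [lintegral_const_mul]
    exact h1.comp measurable_prodMk_left
  rw [key hφ hg, key hg hφ]
  exact lintegral_congr fun s => heatKernel_reversible α s hφ hg

theorem tendsto_poissonOp_exp {d : ℕ} {α : Fin d → ℝ} (hα : ∀ j, -1 < α j) {k : Fin d → ℝ}
    (hk : ∀ j, 0 ≤ k j) {y : Fin d → ℝ} (hy : y ∈ posOrthant d) :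
    Filter.Tendsto (fun t => ∫⁻ z, ENNReal.ofReal (exp (-∑ j, k j * z j)) ∂laguerrePoisson α t y)
      (nhdsWithin 0 (Ioi 0)) (nhds (ENNReal.ofReal (exp (-∑ j, k j * y j)))) := by
  have hlap : Filter.Tendsto (fun s => heatLaplace α k s y) (nhdsWithin 0 (Ioi 0))
      (nhds (exp (-∑ j, k j * y j))) := by
    have hc : ContinuousAt (fun s => heatLaplace α k s y) 0 := by
      unfold heatLaplace
      refine tendsto_finsetProd _ fun j _ => ?_
      have h1 : ContinuousAt (fun s : ℝ => 1 + k j * (1 - exp (-s))) 0 := by fun_prop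
      refine ContinuousAt.mul (h1.rpow_const (Or.inl (by simp))) ?_
      refine (ContinuousAt.div (by fun_prop) h1 (by simp)).neg.rexp
    have h0 : heatLaplace α k 0 y = exp (-∑ j, k j * y j) := by
      simp [heatLaplace, ← exp_sum]
    rw [← h0]
    exact hc.tendsto.mono_left nhdsWithin_le_nhds
  have habs : (fun j => |y j|) = y := funext fun j => abs_of_pos (mem_posOrthant.1 hy j)
  have hnn : ∀ s > 0, 0 ≤ heatLaplace α k s y := fun s hs => heatLaplace_nonneg α hk hs.le y
  have hle : ∀ s > 0, heatLaplace α k s y ≤ 1 := by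
    intro s hs
    have := isMarkovKernel_heatKernel hα
    have h := lintegral_exp_heatKernel hα hk (s, y)
    simp only [posTime_of_pos hs, habs] at h
    have h2 : ENNReal.ofReal (heatLaplace α k s y) ≤ 1 := by
      rw [← h]
      calc _ ≤ ∫⁻ _, 1 ∂heatKernel α (s, y) := by
            refine lintegral_mono_ae (ae_heatKernel_of_ae _ _ ?_)
            filter_upwards [ae_restrict_mem (measurableSet_posOrthant d)] with z hz
            simp only [ENNReal.ofReal_le_one, exp_le_one_iff, neg_nonpos]
            exact Finset.sum_nonneg fun j _ => mul_nonneg (hk j) (mem_posOrthant.1 hz j).le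
        _ = 1 := by simp
    simpa using h2
  have hmeas : Measurable fun s => heatLaplace α k s y := by
    have := (measurable_heatLaplace α k).comp (measurable_prodMk_right (y := y) (α := ℝ))
    simpa only [Function.comp_def] using this
  have hmain := tendsto_integral_subDensity (M := 1) hmeas
    (fun s hs => by rw [abs_of_nonneg (hnn s hs)]; exact hle s hs) hlap
  refine (ENNReal.tendsto_ofReal hmain).congr' ?_
  filter_upwards [self_mem_nhdsWithin] with t ht
  have ht0 : (0 : ℝ) < t := ht
  rw [lintegral_exp_laguerrePoisson hα t hk, habs, lintegral_subMeasure t hmeas.ennreal_ofReal,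
    ofReal_integral_eq_lintegral_ofReal]
  · refine setLIntegral_congr_fun measurableSet_Ioi fun s hs => ?_
    exact ENNReal.ofReal_mul (subDensity_nonneg ht0.le (le_of_lt hs))
  · refine (integrableOn_subDensity ht0).mul_bdd (c := 1) hmeas.aestronglyMeasurable ?_
    filter_upwards [ae_restrict_mem measurableSet_Ioi] with s hs
    rw [norm_of_nonneg (hnn s hs)]; exact hle s hs
  · filter_upwards [ae_restrict_mem measurableSet_Ioi] with s hs
    exact mul_nonneg (subDensity_nonneg ht0.le (le_of_lt hs)) (hnn s hs)

/-- A pointwise limit of the Poisson semigroup at time zero recovers the function a.e. -/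
theorem ae_eq_of_tendsto_poissonOp {d : ℕ} {α : Fin d → ℝ} (hα : ∀ j, -1 < α j)
    {f g : (Fin d → ℝ) → ℝ} {M : ℝ} (hf : Measurable f) (hM : ∀ y, |f y| ≤ M) (hg : Measurable g)
    (hlim : ∀ x ∈ posOrthant d, Filter.Tendsto (fun t => poissonOp α t f x)
      (nhdsWithin 0 (Ioi 0)) (nhds (g x))) :
    ∀ᵐ x ∂volume.restrict (posOrthant d), f x = g x := by
  have := isFiniteMeasure_laguerreMeasure hα
  have hgM : ∀ x ∈ posOrthant d, |g x| ≤ M := fun x hx => by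
    refine le_of_tendsto (hlim x hx).abs ?_
    filter_upwards [self_mem_nhdsWithin] with t ht
    exact abs_poissonOp_le hα ht x fun y _ => hM y
  let τ : ℕ → ℝ := fun n => 1 / ((n : ℝ) + 1)
  have hτpos : ∀ n, 0 < τ n := fun n => by positivity
  have hτ : Filter.Tendsto τ Filter.atTop (nhdsWithin 0 (Ioi 0)) :=
    tendsto_nhdsWithin_iff.2 ⟨tendsto_one_div_add_atTop_nhds_zero_nat,
      Filter.Eventually.of_forall hτpos⟩
  have hmF : Measurable fun y => ENNReal.ofReal (M + f y) := (measurable_const.add hf).ennreal_ofReal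
  have hmG : Measurable fun y => ENNReal.ofReal (M + g y) := (measurable_const.add hg).ennreal_ofReal
  have hF : ∀ t > 0, ∀ x, ∫⁻ y, ENNReal.ofReal (M + f y) ∂laguerrePoisson α t x =
      ENNReal.ofReal (M + poissonOp α t f x) := by
    intro t ht x
    have := isMarkovKernel_laguerrePoisson hα ht
    have hi := integrable_laguerrePoisson hα ht hf hM x
    rw [← ofReal_integral_eq_lintegral_ofReal (f := fun y => M + f y) ((integrable_const M).add hi)
      (Filter.Eventually.of_forall fun y => by simpa using by linarith [neg_le_of_abs_le (hM y)])]
    rw [integral_add (integrable_const M) hi]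
    simp [poissonOp]
  have hle1 : ∀ k : Fin d → ℕ, ∀ x ∈ posOrthant d,
      ENNReal.ofReal (exp (-∑ j, (k j : ℝ) * x j)) ≤ 1 := fun k x hx => by
    simp only [ENNReal.ofReal_le_one, exp_le_one_iff, neg_nonpos]
    exact Finset.sum_nonneg fun j _ => mul_nonneg (Nat.cast_nonneg _) (mem_posOrthant.1 hx j).le
  have hlap : ∀ k : Fin d → ℕ,
      ∫⁻ x, ENNReal.ofReal (exp (-∑ j, (k j : ℝ) * x j)) * ENNReal.ofReal (M + g x)
        ∂laguerreMeasure α =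
      ∫⁻ x, ENNReal.ofReal (M + f x) * ENNReal.ofReal (exp (-∑ j, (k j : ℝ) * x j))
        ∂laguerreMeasure α := by
    intro k
    have hk : ∀ j, (0 : ℝ) ≤ k j := fun j => Nat.cast_nonneg _
    have hmφ : Measurable fun x : Fin d → ℝ => ENNReal.ofReal (exp (-∑ j, (k j : ℝ) * x j)) := by
      fun_prop
    have hfin : ∫⁻ _, ENNReal.ofReal (2 * M) ∂laguerreMeasure α ≠ ⊤ := by
      simp [ENNReal.mul_eq_top]
    have hL := tendsto_lintegral_of_dominated_convergence (μ := laguerreMeasure α)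
      (F := fun n x => ENNReal.ofReal (exp (-∑ j, (k j : ℝ) * x j)) *
        ∫⁻ y, ENNReal.ofReal (M + f y) ∂laguerrePoisson α (τ n) x)
      (f := fun x => ENNReal.ofReal (exp (-∑ j, (k j : ℝ) * x j)) * ENNReal.ofReal (M + g x))
      (fun _ => ENNReal.ofReal (2 * M)) (fun n => hmφ.mul hmF.lintegral_kernel) ?_ hfin ?_
    have hR := tendsto_lintegral_of_dominated_convergence (μ := laguerreMeasure α)
      (F := fun n x => ENNReal.ofReal (M + f x) *
        ∫⁻ y, ENNReal.ofReal (exp (-∑ j, (k j : ℝ) * y j)) ∂laguerrePoisson α (τ n) x)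
      (f := fun x => ENNReal.ofReal (M + f x) * ENNReal.ofReal (exp (-∑ j, (k j : ℝ) * x j)))
      (fun _ => ENNReal.ofReal (2 * M)) (fun n => hmF.mul hmφ.lintegral_kernel) ?_ hfin ?_
    · simp_rw [laguerrePoisson_reversible hα _ hmφ hmF] at hL
      exact tendsto_nhds_unique hL hR
    · intro n
      refine Filter.Eventually.of_forall fun x => ?_
      have := isMarkovKernel_laguerrePoisson hα (hτpos n)
      calc _ ≤ ENNReal.ofReal (2 * M) * ∫⁻ _, 1 ∂laguerrePoisson α (τ n) x := by
            refine mul_le_mul' (ENNReal.ofReal_le_ofReal ?_) (lintegral_mono_ae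
              (ae_laguerrePoisson_of_ae _ _ _ ?_))
            · linarith [le_of_abs_le (hM x)]
            · filter_upwards [ae_restrict_mem (measurableSet_posOrthant d)] with y hy
              exact hle1 k y hy
        _ = _ := by simp
    · filter_upwards [laguerreMeasure_pos α] with x hx
      refine ENNReal.Tendsto.const_mul ((tendsto_poissonOp_exp hα hk hx).comp hτ)
        (Or.inr ENNReal.ofReal_ne_top)
    · intro n
      filter_upwards [laguerreMeasure_pos α] with x hx
      rw [hF _ (hτpos n)]
      calc _ ≤ 1 * ENNReal.ofReal (2 * M) := by
            refine mul_le_mul' (hle1 k x hx) (ENNReal.ofReal_le_ofReal ?_)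
            linarith [le_of_abs_le (abs_poissonOp_le hα (hτpos n) (f := f) x fun y _ => hM y)]
        _ = _ := one_mul _
    · filter_upwards [laguerreMeasure_pos α] with x hx
      simp_rw [hF _ (hτpos _)]
      refine ENNReal.Tendsto.const_mul (ENNReal.tendsto_ofReal
        (((hlim x hx).comp hτ).const_add M)) (Or.inr ENNReal.ofReal_ne_top)
  have hfinF : ∫⁻ x, ENNReal.ofReal (M + f x) ∂laguerreMeasure α ≠ ⊤ := by
    refine ne_top_of_le_ne_top ?_ (lintegral_mono (g := fun _ => ENNReal.ofReal (2 * M))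
      fun x => ENNReal.ofReal_le_ofReal (by linarith [le_of_abs_le (hM x)]))
    simp [ENNReal.mul_eq_top]
  have hfinG : ∫⁻ x, ENNReal.ofReal (M + g x) ∂laguerreMeasure α ≠ ⊤ := by
    have := hlap 0
    simp only [Pi.zero_apply, Nat.cast_zero, zero_mul, Finset.sum_const_zero, neg_zero, exp_zero,
      ENNReal.ofReal_one, one_mul, mul_one] at this
    rw [this]; exact hfinF
  have heq : (laguerreMeasure α).withDensity (fun x => ENNReal.ofReal (M + f x)) =
      (laguerreMeasure α).withDensity (fun x => ENNReal.ofReal (M + g x)) := by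
    have := isFiniteMeasure_withDensity hfinF
    have := isFiniteMeasure_withDensity hfinG
    have hpos : ∀ h : (Fin d → ℝ) → ENNReal, ∀ᵐ y ∂(laguerreMeasure α).withDensity h,
        ∀ i, 0 < y i := fun h => (withDensity_absolutelyContinuous _ _).ae_le
      ((laguerreMeasure_pos α).mono fun y hy => mem_posOrthant.1 hy)
    refine ext_of_laplace (hpos _) (hpos _) fun k => ?_
    rw [lintegral_withDensity_eq_lintegral_mul _ hmF (by fun_prop),
      lintegral_withDensity_eq_lintegral_mul _ hmG (by fun_prop)]
    simp_rw [Pi.mul_apply]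
    rw [← hlap k]
    exact lintegral_congr fun x => mul_comm _ _
  rw [withDensity_eq_iff hmF.aemeasurable hmG.aemeasurable hfinF] at heq
  filter_upwards [(absolutelyContinuous_laguerreMeasure α).ae_le heq,
    ae_restrict_mem (measurableSet_posOrthant d)] with x hx hxo
  rw [ENNReal.ofReal_eq_ofReal_iff (by linarith [neg_le_of_abs_le (hM x)])
    (by linarith [neg_le_of_abs_le (hgM x hxo)])] at hx
  linarith

theorem abs_sub_le_of_hasDerivAt_Ici {U U' : ℝ → ℝ} {a C : ℝ}
    (hU : ∀ s, a ≤ s → HasDerivAt U (U' s) s) (hC : ∀ s, a ≤ s → |U' s| ≤ C) {b : ℝ} (hab : a ≤ b) :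
    |U b - U a| ≤ C * (b - a) := by
  have := Convex.norm_image_sub_le_of_norm_hasDerivWithin_le (f := U) (f' := U') (s := Ici a)
    (C := C) (fun s hs => (hU s hs).hasDerivWithinAt) (fun s hs => hC s hs) (convex_Ici a)
    (mem_Ici.2 le_rfl) (mem_Ici.2 hab)
  simpa [abs_of_nonneg (sub_nonneg.2 hab)] using this

/-- A function with derivative `O(t ^ (β - 1))` has a limit at `0`, with rate `t ^ β`. -/
theorem exists_tendsto_of_abs_deriv_le {U U' : ℝ → ℝ} {A β M : ℝ} (hβ : 0 < β) (hA : 0 ≤ A)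
    (hU : ∀ s > 0, HasDerivAt U (U' s) s) (hU' : ∀ s > 0, |U' s| ≤ A * s ^ (β - 1))
    (hM : ∀ s > 0, |U s| ≤ M) :
    ∃ l, Filter.Tendsto U (nhdsWithin 0 (Ioi 0)) (nhds l) ∧
      ∀ b > 0, |U b - l| ≤ A / β * b ^ β := by
  have hpow : ∀ s > (0 : ℝ), HasDerivAt (fun s => A / β * s ^ β) (A * s ^ (β - 1)) s := fun s hs => by
    have := (hasDerivAt_rpow_const (x := s) (p := β) (Or.inl hs.ne')).const_mul (A / β)
    convert! this using 1
    field_simp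
  have mono : ∀ ε : ℝ, |ε| = 1 → MonotoneOn (fun s => A / β * s ^ β - ε * U s) (Ioi 0) := by
    intro ε hε
    have hd : ∀ s > 0, HasDerivAt (fun s => A / β * s ^ β - ε * U s)
        (A * s ^ (β - 1) - ε * U' s) s := fun s hs => (hpow s hs).sub ((hU s hs).const_mul ε)
    refine monotoneOn_of_deriv_nonneg (convex_Ioi 0)
      (fun s hs => (hd s hs).continuousAt.continuousWithinAt)
      (fun s hs => ?_) fun s hs => ?_
    · rw [interior_Ioi] at hs
      exact (hd s hs).differentiableAt.differentiableWithinAt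
    · rw [interior_Ioi] at hs
      rw [(hd s hs).deriv]
      have h1 : ε * U' s ≤ |U' s| := by
        calc _ ≤ |ε * U' s| := le_abs_self _
          _ = _ := by rw [abs_mul, hε, one_mul]
      linarith [hU' s hs]
  have hp0 : Filter.Tendsto (fun s : ℝ => A / β * s ^ β) (nhdsWithin 0 (Ioi 0)) (nhds 0) := by
    have : ContinuousAt (fun s : ℝ => A / β * s ^ β) 0 :=
      continuousAt_const.mul (continuousAt_rpow_const _ _ (Or.inr hβ.le))
    have h := this.tendsto.mono_left (nhdsWithin_le_nhds (s := Ioi 0))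
    simpa [zero_rpow hβ.ne'] using h
  have hm1 := (mono 1 (by simp)).mono (Ioo_subset_Ioi_self : Ioo (0 : ℝ) 1 ⊆ Ioi 0)
  have hbdd : BddBelow ((fun s => A / β * s ^ β - 1 * U s) '' Ioo 0 1) := by
    refine ⟨-M, ?_⟩
    rintro _ ⟨s, hs, rfl⟩
    have h1 := le_of_abs_le (hM s hs.1)
    have h2 : 0 ≤ A / β * s ^ β := by have := hs.1; positivity
    simp only
    linarith
  have hlim := hm1.tendsto_nhdsWithin_Ioo_right (nonempty_Ioo.2 one_pos) hbdd
  obtain ⟨l, hl⟩ : ∃ l, Filter.Tendsto U (nhdsWithin 0 (Ioi 0)) (nhds l) := by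
    refine ⟨_, (hp0.sub hlim).congr fun s => ?_⟩
    ring
  refine ⟨l, hl, fun b hb => ?_⟩
  have bound : ∀ ε : ℝ, |ε| = 1 → ε * (U b - l) ≤ A / β * b ^ β := by
    intro ε hε
    have h1 : Filter.Tendsto (fun s => A / β * s ^ β - ε * U s) (nhdsWithin 0 (Ioi 0))
        (nhds (0 - ε * l)) := hp0.sub (hl.const_mul ε)
    have h2 : 0 - ε * l ≤ A / β * b ^ β - ε * U b := by
      refine le_of_tendsto h1 ?_
      filter_upwards [Ioo_mem_nhdsGT hb] with s hs
      exact mono ε hε hs.1 hb hs.2.le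
    linarith
  refine abs_le.2 ⟨?_, ?_⟩
  · have := bound (-1) (by simp); linarith
  · have := bound 1 (by simp); linarith

theorem integral_rpow_mul_min {lam t : ℝ} (hlam : 0 < lam) (hlam1 : lam < 1) (ht : 0 < t) :
    IntegrableOn (fun u : ℝ => u ^ (-lam - 1) * min (u / t) 1) (Ioi 0) ∧
      ∫ u in Ioi 0, u ^ (-lam - 1) * min (u / t) 1 = t ^ (-lam) * (1 / (1 - lam) + 1 / lam) := by
  have hsplit : Ioi (0 : ℝ) = Ioc 0 t ∪ Ioi t := (Ioc_union_Ioi_eq_Ioi ht.le).symm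
  have e1 : EqOn (fun u : ℝ => u ^ (-lam - 1) * min (u / t) 1) (fun u => u ^ (-lam) * t⁻¹)
      (Ioc 0 t) := fun u hu => by
    have h1 : u / t ≤ 1 := (div_le_one ht).2 hu.2
    simp only [min_eq_left h1]
    rw [rpow_sub_one hu.1.ne']
    have := hu.1
    field_simp
  have e2 : EqOn (fun u : ℝ => u ^ (-lam - 1) * min (u / t) 1) (fun u => u ^ (-lam - 1))
      (Ioi t) := fun u hu => by
    have h1 : 1 ≤ u / t := (one_le_div ht).2 (le_of_lt hu)
    simp only [min_eq_right h1, mul_one]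
  have i1 : IntegrableOn (fun u : ℝ => u ^ (-lam) * t⁻¹) (Ioc 0 t) := by
    have h := intervalIntegral.intervalIntegrable_rpow' (a := 0) (b := t) (r := -lam) (by linarith)
    exact ((intervalIntegrable_iff_integrableOn_Ioc_of_le ht.le).1 h).mul_const _
  have i2 : IntegrableOn (fun u : ℝ => u ^ (-lam - 1)) (Ioi t) :=
    integrableOn_Ioi_rpow_of_lt (by linarith) ht
  have j1 := i1.congr_fun e1.symm measurableSet_Ioc
  have j2 := i2.congr_fun e2.symm measurableSet_Ioi
  refine ⟨by rw [hsplit]; exact j1.union j2, ?_⟩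
  rw [hsplit, setIntegral_union Ioc_disjoint_Ioi_same measurableSet_Ioi j1 j2,
    setIntegral_congr_fun measurableSet_Ioc e1, setIntegral_congr_fun measurableSet_Ioi e2,
    integral_Ioi_rpow_of_lt (by linarith) ht, integral_mul_const,
    ← intervalIntegral.integral_of_le ht.le, integral_rpow (Or.inl (by linarith))]
  have h1 : 1 - lam ≠ 0 := by linarith
  rw [zero_rpow (by linarith), show -lam - 1 + 1 = -lam by ring, rpow_add_one ht.ne',
    show -lam + 1 = 1 - lam by ring]
  field_simp
  ring

theorem one_sub_exp_neg_le_min (u : ℝ) : 1 - exp (-u) ≤ min (u / 1) 1 := by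
  refine le_min ?_ ?_
  · have := add_one_le_exp (-u); linarith
  · have := exp_pos (-u); linarith

/-- The majorant of the integrand of the Bessel fractional derivative. -/
noncomputable def fracMajorant (lam β A M u : ℝ) : ℝ :=
  A / β * (exp (-u) * u ^ (β - lam - 1)) + M * (u ^ (-lam - 1) * min (u / 1) 1)

theorem integrableOn_fracMajorant {lam β : ℝ} (hlam : 0 < lam) (hlam1 : lam < 1) (hβ : lam < β)
    (A M : ℝ) : IntegrableOn (fracMajorant lam β A M) (Ioi 0) := by
  have h1 := GammaIntegral_convergent (s := β - lam) (by linarith)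
  exact (h1.const_mul _).add ((integral_rpow_mul_min hlam hlam1 one_pos).1.const_mul _)

theorem integral_fracMajorant {lam β : ℝ} (hlam : 0 < lam) (hlam1 : lam < 1) (hβ : lam < β)
    (A M : ℝ) : ∫ u in Ioi 0, fracMajorant lam β A M u =
      A / β * Gamma (β - lam) + M * (1 / (1 - lam) + 1 / lam) := by
  have h1 := GammaIntegral_convergent (s := β - lam) (by linarith)
  obtain ⟨h2, h3⟩ := integral_rpow_mul_min hlam hlam1 one_pos
  unfold fracMajorant
  rw [integral_add (h1.const_mul _) (h2.const_mul _), integral_const_mul, integral_const_mul,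
    ← Gamma_eq_integral (by linarith), h3, one_rpow, one_mul]

theorem abs_frac_integrand_le {lam β A M U v u : ℝ} (hu : 0 < u)
    (hU : |U - v| ≤ A / β * u ^ β) (hv : |v| ≤ M) :
    |u ^ (-lam - 1) * (exp (-u) * U - v)| ≤ fracMajorant lam β A M u := by
  have hp : 0 < u ^ (-lam - 1) := rpow_pos_of_pos hu _
  have h1 := one_sub_exp_neg_le_min u
  have h0 : 0 ≤ 1 - exp (-u) := by simpa using hu.le
  have hM : 0 ≤ M := (abs_nonneg _).trans hv
  have h2 : |exp (-u) * U - v| ≤ exp (-u) * (A / β * u ^ β) + M * min (u / 1) 1 := by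
    have e : exp (-u) * U - v = exp (-u) * (U - v) - (1 - exp (-u)) * v := by ring
    rw [e]
    refine (abs_sub _ _).trans ?_
    rw [abs_mul, abs_mul, abs_of_pos (exp_pos _), abs_of_nonneg h0]
    have h3 := mul_le_mul h1 hv (abs_nonneg _) (h0.trans h1)
    have h4 := mul_le_mul_of_nonneg_left hU (exp_pos (-u)).le
    linarith
  rw [abs_mul, abs_of_pos hp]
  refine (mul_le_mul_of_nonneg_left h2 hp.le).trans_eq ?_
  rw [fracMajorant, show β - lam - 1 = -lam - 1 + β by ring, rpow_add hu]
  ring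

theorem not_integrableOn_frac_integrand {lam v l : ℝ} {U : ℝ → ℝ} (hlam : 0 < lam)
    (hU : Filter.Tendsto U (nhdsWithin 0 (Ioi 0)) (nhds l)) (hv : v ≠ l) :
    ¬ IntegrableOn (fun u => u ^ (-lam - 1) * (exp (-u) * U u - v)) (Ioi 0) := by
  intro hinteg
  have hc : 0 < |l - v| := abs_pos.2 (sub_ne_zero.2 hv.symm)
  have hexp : Filter.Tendsto (fun u : ℝ => exp (-u)) (nhdsWithin 0 (Ioi 0)) (nhds 1) := by
    have : ContinuousAt (fun u : ℝ => exp (-u)) 0 := by fun_prop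
    simpa using this.tendsto.mono_left (nhdsWithin_le_nhds (s := Ioi 0))
  have hlim : Filter.Tendsto (fun u => |exp (-u) * U u - v|) (nhdsWithin 0 (Ioi 0))
      (nhds |l - v|) := by
    simpa using ((hexp.mul hU).sub_const v).abs
  have hev := hlim.eventually (lt_mem_nhds (half_lt_self hc))
  obtain ⟨δ, hδ, hsub⟩ := mem_nhdsGT_iff_exists_Ioo_subset.1 hev
  have hδ0 : 0 < δ := hδ
  have hI : IntegrableOn (fun u : ℝ => u ^ (-lam - 1)) (Ioo 0 δ) := by
    refine Integrable.mono' ((hinteg.mono_set Ioo_subset_Ioi_self).norm.const_mul (2 / |l - v|))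
      (by fun_prop) ?_
    filter_upwards [ae_restrict_mem measurableSet_Ioo] with u hu
    have hp : 0 < u ^ (-lam - 1) := rpow_pos_of_pos hu.1 _
    have h1 : |l - v| / 2 < |exp (-u) * U u - v| := hsub hu
    rw [norm_mul, norm_of_nonneg hp.le, norm_eq_abs, div_mul_eq_mul_div, le_div_iff₀ hc]
    nlinarith
  have := (intervalIntegral.integrableOn_Ioo_rpow_iff hδ0).1 hI
  linarith

theorem exists_boundary_value {d : ℕ} {α : Fin d → ℝ} (hα : ∀ j, -1 < α j) {β A M : ℝ}
    (hβ : 0 < β) (hA : 0 ≤ A) {f : (Fin d → ℝ) → ℝ} (hf : Measurable f) (hM : ∀ y, |f y| ≤ M)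
    (hL : ∀ t > (0 : ℝ), ∀ x ∈ posOrthant d,
      |deriv (fun u => poissonOp α u f x) t| ≤ A * t ^ (β - 1)) :
    ∃ g : (Fin d → ℝ) → ℝ, Measurable g ∧ ∀ x ∈ posOrthant d,
      Filter.Tendsto (fun t => poissonOp α t f x) (nhdsWithin 0 (Ioi 0)) (nhds (g x)) ∧
      ∀ b > 0, |poissonOp α b f x - g x| ≤ A / β * b ^ β := by
  have hex : ∀ x, ∃ l, x ∈ posOrthant d →
      Filter.Tendsto (fun t => poissonOp α t f x) (nhdsWithin 0 (Ioi 0)) (nhds l) ∧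
      ∀ b > 0, |poissonOp α b f x - l| ≤ A / β * b ^ β := by
    intro x
    by_cases hx : x ∈ posOrthant d
    · obtain ⟨l, hl⟩ := exists_tendsto_of_abs_deriv_le (U := fun t => poissonOp α t f x) hβ hA
        (fun s hs => by
          obtain ⟨U', h, -⟩ := exists_hasDerivAt_poissonOp hα hs hf hM x
          exact h.differentiableAt.hasDerivAt)
        (fun s hs => hL s hs x hx) (M := M) (fun s hs => abs_poissonOp_le hα hs x fun y _ => hM y)
      exact ⟨l, fun _ => hl⟩
    · exact ⟨0, fun h => absurd h hx⟩
  choose l hl using hex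
  let τ : ℕ → ℝ := fun n => 1 / ((n : ℝ) + 1)
  have hτpos : ∀ n, 0 < τ n := fun n => by positivity
  have hτ : Filter.Tendsto τ Filter.atTop (nhdsWithin 0 (Ioi 0)) :=
    tendsto_nhdsWithin_iff.2 ⟨tendsto_one_div_add_atTop_nhds_zero_nat,
      Filter.Eventually.of_forall hτpos⟩
  refine ⟨(posOrthant d).indicator l, ?_, fun x hx => ?_⟩
  · refine measurable_of_tendsto_metrizable (f := fun n => (posOrthant d).indicator
      (poissonOp α (τ n) f)) (fun n => (measurable_poissonOp_right α _ hf).indicator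
        (measurableSet_posOrthant d)) (tendsto_pi_nhds.2 fun x => ?_)
    by_cases hx : x ∈ posOrthant d
    · simp only [indicator_of_mem hx]
      exact (hl x hx).1.comp hτ
    · simp [indicator_of_notMem hx]
  · rw [indicator_of_mem hx]
    exact hl x hx

theorem abs_integral_frac_le {d : ℕ} {α : Fin d → ℝ} (hα : ∀ j, -1 < α j) {lam β A M : ℝ}
    (hlam : 0 < lam) (hlamβ : lam < β) (hβ1 : β < 1) (hA : 0 ≤ A)
    {f : (Fin d → ℝ) → ℝ} (hf : Measurable f) (hM : ∀ y, |f y| ≤ M)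
    (hL : ∀ t > (0 : ℝ), ∀ x ∈ posOrthant d,
      |deriv (fun u => poissonOp α u f x) t| ≤ A * t ^ (β - 1))
    {x : Fin d → ℝ} (hx : x ∈ posOrthant d) :
    |∫ u in Ioi 0, u ^ (-lam - 1) * (exp (-u) * poissonOp α u f x - f x)| ≤
      A / β * Gamma (β - lam) + M * (1 / (1 - lam) + 1 / lam) := by
  obtain ⟨g, -, hg⟩ := exists_boundary_value hα (hlam.trans hlamβ) hA hf hM hL
  have hM0 : 0 ≤ M := (abs_nonneg _).trans (hM x)
  have hinteg := integral_fracMajorant hlam (hlamβ.trans hβ1) hlamβ A M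
  by_cases hfg : f x = g x
  · rw [← hinteg, ← norm_eq_abs]
    refine norm_integral_le_of_norm_le (integrableOn_fracMajorant hlam (hlamβ.trans hβ1) hlamβ A M)
      ?_
    filter_upwards [ae_restrict_mem measurableSet_Ioi] with u hu
    exact abs_frac_integrand_le hu (by rw [hfg]; exact (hg x hx).2 u hu) (hM x)
  · rw [integral_undef (not_integrableOn_frac_integrand hlam (hg x hx).1 hfg), abs_zero]
    have h1 := (Gamma_pos_of_pos (sub_pos.2 hlamβ)).le
    have h2 : 0 < 1 - lam := by linarith
    have h3 : 0 < β := hlam.trans hlamβ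
    positivity

/-- The Poisson semigroup commutes with the fractional difference integral. -/
theorem poissonOp_integral_frac {d : ℕ} {α : Fin d → ℝ} (hα : ∀ j, -1 < α j) {lam β A M : ℝ}
    (hlam : 0 < lam) (hlamβ : lam < β) (hβ1 : β < 1) (hA : 0 ≤ A)
    {f : (Fin d → ℝ) → ℝ} (hf : Measurable f) (hM : ∀ y, |f y| ≤ M)
    (hL : ∀ t > (0 : ℝ), ∀ x ∈ posOrthant d,
      |deriv (fun u => poissonOp α u f x) t| ≤ A * t ^ (β - 1))
    (x : Fin d → ℝ) {t : ℝ} (ht : 0 < t) :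
    IntegrableOn (fun u => u ^ (-lam - 1) * (exp (-u) * poissonOp α (t + u) f x - poissonOp α t f x))
      (Ioi 0) ∧
    poissonOp α t (fun y => ∫ u in Ioi 0, u ^ (-lam - 1) * (exp (-u) * poissonOp α u f y - f y)) x =
      ∫ u in Ioi 0, u ^ (-lam - 1) * (exp (-u) * poissonOp α (t + u) f x - poissonOp α t f x) := by
  have := isMarkovKernel_laguerrePoisson hα ht
  obtain ⟨g, hgm, hg⟩ := exists_boundary_value hα (hlam.trans hlamβ) hA hf hM hL
  have hae := ae_laguerrePoisson_of_ae α t x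
    (ae_eq_of_tendsto_poissonOp hα hf hM hgm fun x hx => (hg x hx).1)
  have hae' := ae_laguerrePoisson_of_ae α t x (ae_restrict_mem (measurableSet_posOrthant d))
  obtain ⟨G, hGm, hG⟩ := measurable_poissonOp hα hf hM
  let F : (Fin d → ℝ) → ℝ → ℝ := fun y u => u ^ (-lam - 1) * (exp (-u) * G (u, y) - f y)
  have hFm : Measurable (Function.uncurry F) := by
    have h1 : Measurable fun q : (Fin d → ℝ) × ℝ => G (q.2, q.1) := hGm.comp measurable_swap
    have h2 : Measurable fun q : (Fin d → ℝ) × ℝ => f q.1 := hf.comp measurable_fst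
    exact (measurable_snd.pow_const _).mul ((measurable_snd.neg.exp.mul h1).sub h2)
  have hFint : Integrable (Function.uncurry F)
      ((laguerrePoisson α t x).prod (volume.restrict (Ioi 0))) := by
    refine Integrable.mono' ((integrableOn_fracMajorant hlam (hlamβ.trans hβ1) hlamβ A M).comp_snd
      (laguerrePoisson α t x)) hFm.aestronglyMeasurable ?_
    filter_upwards [Measure.quasiMeasurePreserving_fst.ae hae,
      Measure.quasiMeasurePreserving_fst.ae hae',
      Measure.quasiMeasurePreserving_snd.ae (ae_restrict_mem measurableSet_Ioi)] with q h1 h2 h3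
    simp only [Function.uncurry_def, F]
    rw [hG _ h3]
    exact abs_frac_integrand_le h3 (by rw [h1]; exact (hg _ h2).2 _ h3) (hM _)
  have hinner : ∀ u ∈ Ioi (0 : ℝ), ∫ y, F y u ∂laguerrePoisson α t x =
      u ^ (-lam - 1) * (exp (-u) * poissonOp α (t + u) f x - poissonOp α t f x) := by
    intro u hu
    have hu0 : 0 < u := hu
    have i1 : Integrable (poissonOp α u f) (laguerrePoisson α t x) :=
      integrable_laguerrePoisson hα ht (measurable_poissonOp_right α u hf)
        (fun y => abs_poissonOp_le hα hu0 y fun z _ => hM z) x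
    simp only [F, hG u hu0]
    rw [integral_const_mul, integral_sub (i1.const_mul _) (integrable_laguerrePoisson hα ht hf hM x),
      integral_const_mul, ← poissonOp_poissonOp hα ht hu0 hf hM x]
    rfl
  constructor
  · refine (hFint.integral_prod_right).congr ?_
    filter_upwards [ae_restrict_mem measurableSet_Ioi] with u hu
    exact hinner u hu
  · have h1 : (fun y => ∫ u in Ioi 0, u ^ (-lam - 1) * (exp (-u) * poissonOp α u f y - f y)) =
        fun y => ∫ u in Ioi 0, F y u := by
      funext y
      refine setIntegral_congr_fun measurableSet_Ioi fun u hu => ?_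
      simp only [F, hG u hu]
    rw [h1, poissonOp, integral_integral_swap hFint]
    exact setIntegral_congr_fun measurableSet_Ioi hinner

/-- The Lipschitz hypothesis bounds increments of the Poisson semigroup. -/
theorem abs_poissonOp_sub_le {d : ℕ} {α : Fin d → ℝ} (hα : ∀ j, -1 < α j) {β A M : ℝ}
    (hβ1 : β < 1) (hA : 0 ≤ A) {f : (Fin d → ℝ) → ℝ} (hf : Measurable f) (hM : ∀ y, |f y| ≤ M)
    (hL : ∀ t > (0 : ℝ), ∀ x ∈ posOrthant d,
      |deriv (fun u => poissonOp α u f x) t| ≤ A * t ^ (β - 1))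
    {x : Fin d → ℝ} (hx : x ∈ posOrthant d) {a b : ℝ} (ha : 0 < a) (hab : a ≤ b) :
    |poissonOp α b f x - poissonOp α a f x| ≤ A * a ^ (β - 1) * (b - a) := by
  refine abs_sub_le_of_hasDerivAt_Ici (U := fun u => poissonOp α u f x) (fun s hs => ?_)
    (fun s hs => (hL s (ha.trans_le hs) x hx).trans ?_) hab
  · obtain ⟨U', h, -⟩ := exists_hasDerivAt_poissonOp hα (ha.trans_le hs) hf hM x
    exact h.differentiableAt.hasDerivAt
  · exact mul_le_mul_of_nonneg_left (rpow_le_rpow_of_nonpos ha hs (by linarith)) hA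

theorem abs_poissonOp_sub_le_of_bounded {d : ℕ} {α : Fin d → ℝ} (hα : ∀ j, -1 < α j) {M : ℝ}
    {f : (Fin d → ℝ) → ℝ} (hf : Measurable f) (hM : ∀ y, |f y| ≤ M)
    (x : Fin d → ℝ) {a b : ℝ} (ha : 0 < a) (hab : a ≤ b) :
    |poissonOp α b f x - poissonOp α a f x| ≤ 6 * M / a * (b - a) := by
  have hM0 : 0 ≤ M := (abs_nonneg _).trans (hM x)
  refine abs_sub_le_of_hasDerivAt_Ici (U := fun u => poissonOp α u f x)
    (U' := deriv fun u => poissonOp α u f x) (fun s hs => ?_)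
    (fun s hs => ?_) hab
  · obtain ⟨U', h, -⟩ := exists_hasDerivAt_poissonOp hα (ha.trans_le hs) hf hM x
    exact h.differentiableAt.hasDerivAt
  · obtain ⟨U', h, h'⟩ := exists_hasDerivAt_poissonOp hα (ha.trans_le hs) hf hM x
    rw [h.deriv]
    exact h'.trans (by gcongr)

theorem abs_poissonOp_second_difference_le {d : ℕ} {α : Fin d → ℝ} (hα : ∀ j, -1 < α j)
    {β A M : ℝ} (hβ0 : 0 < β) (hβ1 : β < 1) (hA : 0 ≤ A) {f : (Fin d → ℝ) → ℝ} (hf : Measurable f)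
    (hM : ∀ y, |f y| ≤ M)
    (hL : ∀ t > (0 : ℝ), ∀ x ∈ posOrthant d,
      |deriv (fun u => poissonOp α u f x) t| ≤ A * t ^ (β - 1))
    (x : Fin d → ℝ) {t h u : ℝ} (ht : 0 < t) (hh : 0 ≤ h) (hu : 0 < u) :
    |(poissonOp α (t + h + u) f x - poissonOp α (t + u) f x) -
      (poissonOp α (t + h) f x - poissonOp α t f x)| ≤
      24 * A * t ^ (β - 1) * h * min (u / t) 1 := by
  have ht2 : 0 < t / 2 := by positivity
  set D := A * (t / 2) ^ (β - 1) * h with hD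
  have hD0 : 0 ≤ D := by positivity
  have hDle : D ≤ 2 * (A * t ^ (β - 1) * h) := by
    have h1 : (t / 2) ^ (β - 1) ≤ 2 * t ^ (β - 1) := by
      rw [div_rpow ht.le two_pos.le, div_le_iff₀ (by positivity)]
      have h2 : (2 : ℝ) ^ (-1 : ℝ) ≤ 2 ^ (β - 1) :=
        rpow_le_rpow_of_exponent_le one_le_two (by linarith)
      rw [rpow_neg_one] at h2
      have h3 : 0 < t ^ (β - 1) := by positivity
      nlinarith
    calc D ≤ A * (2 * t ^ (β - 1)) * h := by rw [hD]; gcongr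
      _ = _ := by ring
  let Δ : (Fin d → ℝ) → ℝ := (posOrthant d).indicator fun y =>
    poissonOp α (t / 2 + h) f y - poissonOp α (t / 2) f y
  have hΔm : Measurable Δ := ((measurable_poissonOp_right α _ hf).sub
    (measurable_poissonOp_right α _ hf)).indicator (measurableSet_posOrthant d)
  have hΔ : ∀ y, |Δ y| ≤ D := by
    intro y
    by_cases hy : y ∈ posOrthant d
    · simp only [Δ, indicator_of_mem hy]
      have := abs_poissonOp_sub_le hα hβ1 hA hf hM hL hy ht2 (b := t / 2 + h) (by linarith)
      rwa [add_sub_cancel_left] at this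
    · simpa [Δ, indicator_of_notMem hy] using hD0
  have hΔP : ∀ a > 0, poissonOp α a Δ x =
      poissonOp α (a + (t / 2 + h)) f x - poissonOp α (a + t / 2) f x := by
    intro a ha
    have hi : ∀ s > 0, Integrable (poissonOp α s f) (laguerrePoisson α a x) := fun s hs =>
      integrable_laguerrePoisson hα ha (measurable_poissonOp_right α s hf)
        (fun y => abs_poissonOp_le hα hs y fun z _ => hM z) x
    rw [← poissonOp_poissonOp hα ha (by linarith) hf hM, ← poissonOp_poissonOp hα ha ht2 hf hM,
      poissonOp_congr α a (g := fun y => poissonOp α (t / 2 + h) f y - poissonOp α (t / 2) f y)]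
    · exact integral_sub (hi _ (by linarith)) (hi _ ht2)
    · filter_upwards [ae_restrict_mem (measurableSet_posOrthant d)] with y hy
      exact indicator_of_mem hy _
  have e : (poissonOp α (t + h + u) f x - poissonOp α (t + u) f x) -
      (poissonOp α (t + h) f x - poissonOp α t f x) =
      poissonOp α (t / 2 + u) Δ x - poissonOp α (t / 2) Δ x := by
    rw [hΔP _ (by linarith), hΔP _ ht2]
    congr 3 <;> ring
  rw [e]
  have b1 : |poissonOp α (t / 2 + u) Δ x - poissonOp α (t / 2) Δ x| ≤ 12 * D * (u / t) := by
    refine (abs_poissonOp_sub_le_of_bounded hα hΔm hΔ x ht2 (by linarith)).trans_eq ?_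
    field_simp
    ring
  have b2 : |poissonOp α (t / 2 + u) Δ x - poissonOp α (t / 2) Δ x| ≤ 12 * D := by
    have h1 := abs_poissonOp_le hα (show 0 < t / 2 + u by linarith) x fun y _ => hΔ y
    have h2 := abs_poissonOp_le hα ht2 x fun y _ => hΔ y
    refine (abs_sub _ _).trans ?_
    linarith
  calc _ ≤ 12 * D * min (u / t) 1 := by
        rcases min_choice (u / t) 1 with h | h <;> rw [h]
        · exact b1
        · rw [mul_one]; exact b2
    _ ≤ 12 * (2 * (A * t ^ (β - 1) * h)) * min (u / t) 1 := by gcongr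
    _ = _ := by ring

theorem abs_frac_increment_le {d : ℕ} {α : Fin d → ℝ} (hα : ∀ j, -1 < α j) {lam β A M : ℝ}
    (hlam : 0 < lam) (hlamβ : lam < β) (hβ1 : β < 1) (hA : 0 ≤ A)
    {f : (Fin d → ℝ) → ℝ} (hf : Measurable f) (hM : ∀ y, |f y| ≤ M)
    (hL : ∀ t > (0 : ℝ), ∀ x ∈ posOrthant d,
      |deriv (fun u => poissonOp α u f x) t| ≤ A * t ^ (β - 1))
    {x : Fin d → ℝ} (hx : x ∈ posOrthant d) {t h : ℝ} (ht : 0 < t) (hh : 0 ≤ h) :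
    |(∫ u in Ioi 0, u ^ (-lam - 1) *
        (exp (-u) * poissonOp α (t + h + u) f x - poissonOp α (t + h) f x)) -
      ∫ u in Ioi 0, u ^ (-lam - 1) * (exp (-u) * poissonOp α (t + u) f x - poissonOp α t f x)| ≤
      25 * (1 / (1 - lam) + 1 / lam) * (M + A) * t ^ (β - lam - 1) * h := by
  have hM0 : 0 ≤ M := (abs_nonneg _).trans (hM x)
  have hlam1 : lam < 1 := hlamβ.trans hβ1
  have h1l : 0 < 1 - lam := by linarith
  set B := (A + 6 * M) * t ^ (β - lam - 1) * h with hB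
  have hB0 : 0 ≤ B := by positivity
  have hdiff : |poissonOp α (t + h) f x - poissonOp α t f x| ≤ B := by
    rcases le_total t 1 with h1 | h1
    · have := abs_poissonOp_sub_le hα hβ1 hA hf hM hL hx ht (b := t + h) (by linarith)
      rw [add_sub_cancel_left] at this
      refine this.trans ?_
      have h2 : t ^ (β - 1) ≤ t ^ (β - lam - 1) :=
        rpow_le_rpow_of_exponent_ge ht h1 (by linarith)
      rw [hB]
      gcongr
      linarith
    · have := abs_poissonOp_sub_le_of_bounded hα hf hM x ht (b := t + h) (by linarith)
      rw [add_sub_cancel_left] at this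
      refine this.trans ?_
      have h2 : t ^ (-1 : ℝ) ≤ t ^ (β - lam - 1) :=
        rpow_le_rpow_of_exponent_le h1 (by linarith)
      rw [rpow_neg_one] at h2
      rw [hB, div_eq_mul_inv]
      gcongr
      linarith
  obtain ⟨i1, -⟩ := poissonOp_integral_frac hα hlam hlamβ hβ1 hA hf hM hL x
    (show 0 < t + h by linarith)
  obtain ⟨i0, -⟩ := poissonOp_integral_frac hα hlam hlamβ hβ1 hA hf hM hL x ht
  obtain ⟨j1, j1'⟩ := integral_rpow_mul_min hlam hlam1 ht
  obtain ⟨j2, j2'⟩ := integral_rpow_mul_min hlam hlam1 one_pos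
  rw [← integral_sub i1 i0, ← norm_eq_abs]
  have hmaj : ∫ u in Ioi 0, (24 * A * t ^ (β - 1) * h * (u ^ (-lam - 1) * min (u / t) 1) +
      B * (u ^ (-lam - 1) * min (u / 1) 1)) =
      24 * A * t ^ (β - 1) * h * (t ^ (-lam) * (1 / (1 - lam) + 1 / lam)) +
        B * (1 / (1 - lam) + 1 / lam) := by
    rw [integral_add (j1.const_mul _) (j2.const_mul _), integral_const_mul, integral_const_mul, j1',
      j2', one_rpow, one_mul]
  refine (norm_integral_le_of_norm_le ((j1.const_mul _).add (j2.const_mul _)) ?_).trans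
    (hmaj.le.trans ?_)
  · filter_upwards [ae_restrict_mem measurableSet_Ioi] with u hu
    have hu0 : 0 < u := hu
    have hp : 0 < u ^ (-lam - 1) := rpow_pos_of_pos hu0 _
    have h0 : 0 ≤ 1 - exp (-u) := by simpa using hu0.le
    have h1 := one_sub_exp_neg_le_min u
    have hS := abs_poissonOp_second_difference_le hα (hlam.trans hlamβ) hβ1 hA hf hM hL x ht hh hu0
    have e : u ^ (-lam - 1) * (exp (-u) * poissonOp α (t + h + u) f x - poissonOp α (t + h) f x) -
        u ^ (-lam - 1) * (exp (-u) * poissonOp α (t + u) f x - poissonOp α t f x) =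
        u ^ (-lam - 1) * (exp (-u) * ((poissonOp α (t + h + u) f x - poissonOp α (t + u) f x) -
          (poissonOp α (t + h) f x - poissonOp α t f x)) -
          (1 - exp (-u)) * (poissonOp α (t + h) f x - poissonOp α t f x)) := by ring
    rw [e, norm_mul, norm_of_nonneg hp.le, Pi.add_apply]
    have b : ‖exp (-u) * ((poissonOp α (t + h + u) f x - poissonOp α (t + u) f x) -
          (poissonOp α (t + h) f x - poissonOp α t f x)) -
          (1 - exp (-u)) * (poissonOp α (t + h) f x - poissonOp α t f x)‖ ≤
        24 * A * t ^ (β - 1) * h * min (u / t) 1 + B * min (u / 1) 1 := by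
      refine (norm_sub_le _ _).trans ?_
      rw [norm_mul, norm_mul, norm_of_nonneg (exp_pos _).le, norm_of_nonneg h0]
      have b1 := mul_le_mul (show exp (-u) ≤ 1 by linarith) hS (abs_nonneg _) zero_le_one
      have b2 := mul_le_mul h1 hdiff (abs_nonneg _) (h0.trans h1)
      simp only [norm_eq_abs]
      linarith
    refine (mul_le_mul_of_nonneg_left b hp.le).trans_eq ?_
    ring
  · have hpw : t ^ (β - 1) * t ^ (-lam) = t ^ (β - lam - 1) := by
      rw [← rpow_add ht]; congr 1; ring
    have hK : 0 < 1 / (1 - lam) + 1 / lam := by positivity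
    have hT : 0 < t ^ (β - lam - 1) := by positivity
    calc _ = (25 * A + 6 * M) * (t ^ (β - lam - 1) * h * (1 / (1 - lam) + 1 / lam)) := by
          rw [hB, ← hpw]; ring
      _ ≤ (25 * (M + A)) * (t ^ (β - lam - 1) * h * (1 / (1 - lam) + 1 / lam)) := by
          gcongr; linarith
      _ = _ := by ring

theorem abs_deriv_le_of_increment {V : ℝ → ℝ} {C e t : ℝ} (hC : 0 ≤ C) (he : -1 ≤ e) (he0 : e ≤ 0)
    (hV : ∀ s > 0, ∀ h ≥ 0, |V (s + h) - V s| ≤ C * s ^ e * h) (ht : 0 < t) :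
    |deriv V t| ≤ 2 * C * t ^ e := by
  have hte : 0 < t ^ e := by positivity
  have hkey : ∀ s, t / 2 < s → C * s ^ e ≤ 2 * C * t ^ e := by
    intro s hs
    have h1 : s ^ e ≤ (t / 2) ^ e := rpow_le_rpow_of_nonpos (by linarith) hs.le he0
    have h2 : (t / 2) ^ e ≤ 2 * t ^ e := by
      rw [div_rpow ht.le two_pos.le, div_le_iff₀ (by positivity)]
      have h2 : (2 : ℝ) ^ (-1 : ℝ) ≤ 2 ^ e := rpow_le_rpow_of_exponent_le one_le_two he
      rw [rpow_neg_one] at h2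
      nlinarith
    nlinarith [mul_le_mul_of_nonneg_left (h1.trans h2) hC]
  rw [← norm_eq_abs]
  refine norm_deriv_le_of_lip' (by positivity) ?_
  filter_upwards [lt_mem_nhds (half_lt_self ht)] with s hs
  rcases le_total t s with hst | hst
  · have := hV t ht (s - t) (by linarith)
    rw [add_sub_cancel] at this
    rw [norm_eq_abs, norm_eq_abs, abs_of_nonneg (sub_nonneg.2 hst)]
    exact this.trans (mul_le_mul_of_nonneg_right (hkey t (by linarith)) (by linarith))
  · have := hV s (by linarith) (t - s) (by linarith)
    rw [add_sub_cancel] at this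
    rw [norm_sub_rev, norm_sub_rev s, norm_eq_abs, norm_eq_abs, abs_of_nonneg (sub_nonneg.2 hst)]
    exact this.trans (mul_le_mul_of_nonneg_right (hkey s hs) (by linarith))

theorem besselLaguerreFracDeriv_bounded_on_lipschitz
    (d : ℕ) (hd : 1 ≤ d) (α : Fin d → ℝ) (hα : ∀ j, -(1 / 2 : ℝ) < α j)
    (lam β : ℝ) (hlam : 0 < lam) (hlamβ : lam < β) (hβ : β < 1) :
    ∃ C > 0, ∀ (f : (Fin d → ℝ) → ℝ) (M A : ℝ), Measurable f → (∀ y, |f y| ≤ M) →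
      (∀ t > (0 : ℝ), ∀ x ∈ posOrthant d,
        |deriv (fun u => plP d α u f x) t| ≤ A * t ^ (β - 1)) →
      (∀ x ∈ posOrthant d, |besselLaguerreFracDeriv d α lam f x| ≤ C * (M + A)) ∧
      (∀ t > (0 : ℝ), ∀ x ∈ posOrthant d,
        |deriv (fun u => plP d α u (besselLaguerreFracDeriv d α lam f) x) t| ≤
          C * (M + A) * t ^ (β - lam - 1)) := by
  have hα' : ∀ j, -1 < α j := fun j => by linarith [hα j]
  have h1l : 0 < 1 - lam := by linarith
  have hβ0 : 0 < β := hlam.trans hlamβ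
  have hΓ : 0 < Gamma (β - lam) := Gamma_pos_of_pos (sub_pos.2 hlamβ)
  set K := 1 / (1 - lam) + 1 / lam with hK
  have hK0 : 0 < K := by positivity
  set κ := 1 / ∫ u in Set.Ioi (0 : ℝ), u ^ (-lam - 1) * (Real.exp (-u) - 1) with hκ
  refine ⟨|κ| * (1 / β * Gamma (β - lam) + K) + 2 * (|κ| * (25 * K)) + 1, by positivity, ?_⟩
  intro f M A hf hM hL
  have hM0 : 0 ≤ M := (abs_nonneg _).trans (hM 0)
  have hA : 0 ≤ A := by
    have := (abs_nonneg _).trans (hL 1 one_pos (fun _ => 1) (mem_posOrthant.2 fun _ => one_pos))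
    simpa using this
  have hL' : ∀ t > (0 : ℝ), ∀ x ∈ posOrthant d,
      |deriv (fun u => poissonOp α u f x) t| ≤ A * t ^ (β - 1) := by
    intro t ht x hx
    have : (fun u => poissonOp α u f x) =ᶠ[nhds t] fun u => plP d α u f x := by
      filter_upwards [lt_mem_nhds ht] with u hu
      exact (plP_eq_poissonOp hα' hu f hx).symm
    rw [this.deriv_eq]
    exact hL t ht x hx
  have hD : ∀ x ∈ posOrthant d, besselLaguerreFracDeriv d α lam f x =
      κ * ∫ u in Ioi 0, u ^ (-lam - 1) * (exp (-u) * poissonOp α u f x - f x) := by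
    intro x hx
    rw [besselLaguerreFracDeriv, ← hκ]
    congr 1
    refine setIntegral_congr_fun measurableSet_Ioi fun u hu => ?_
    simp only [plP_eq_poissonOp hα' hu f hx]
  constructor
  · intro x hx
    rw [hD x hx, abs_mul]
    have h1 := abs_integral_frac_le hα' hlam hlamβ hβ hA hf hM hL' hx
    calc _ ≤ |κ| * (A / β * Gamma (β - lam) + M * K) := by gcongr
      _ ≤ |κ| * ((1 / β * Gamma (β - lam) + K) * (M + A)) := by
        gcongr
        have h2 : 0 ≤ 1 / β * Gamma (β - lam) * M := by positivity
        have h3 : 0 ≤ K * A := by positivity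
        calc _ ≤ A / β * Gamma (β - lam) + M * K + (1 / β * Gamma (β - lam) * M + K * A) := by
              linarith
          _ = _ := by ring
      _ ≤ _ := by
        have h4 : 0 ≤ (2 * (|κ| * (25 * K)) + 1) * (M + A) := by positivity
        linarith
  · intro t ht x hx
    set V : ℝ → ℝ := fun s => κ * ∫ u in Ioi 0, u ^ (-lam - 1) *
      (exp (-u) * poissonOp α (s + u) f x - poissonOp α s f x)
    have hV : (fun u => plP d α u (besselLaguerreFracDeriv d α lam f) x) =ᶠ[nhds t] V := by
      filter_upwards [lt_mem_nhds ht] with s hs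
      rw [plP_eq_poissonOp hα' hs _ hx, poissonOp_congr α s (g := fun y => κ *
        ∫ u in Ioi 0, u ^ (-lam - 1) * (exp (-u) * poissonOp α u f y - f y))
        ((ae_restrict_mem (measurableSet_posOrthant d)).mono hD), poissonOp, integral_const_mul]
      simp only [V]
      rw [← (poissonOp_integral_frac hα' hlam hlamβ hβ hA hf hM hL' x hs).2]
      rfl
    rw [hV.deriv_eq]
    have hinc : ∀ s > 0, ∀ h ≥ 0,
        |V (s + h) - V s| ≤ |κ| * (25 * K * (M + A)) * s ^ (β - lam - 1) * h := by
      intro s hs h hh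
      simp only [V]
      rw [← mul_sub, abs_mul]
      have := abs_frac_increment_le hα' hlam hlamβ hβ hA hf hM hL' hx hs hh
      calc _ ≤ |κ| * (25 * K * (M + A) * s ^ (β - lam - 1) * h) := by gcongr
        _ = _ := by ring
    refine (abs_deriv_le_of_increment (by positivity) (by linarith) (by linarith) hinc ht).trans ?_
    refine mul_le_mul_of_nonneg_right ?_ (by positivity)
    have h4 : 0 ≤ (|κ| * (1 / β * Gamma (β - lam) + K) + 1) * (M + A) := by positivity
    linarith
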